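/- arXiv:2104.12238 — 2 statements merged into one kernel-verified Lean document; each statement's English description precedes it below -/
import Mathlib

section
/- Let N ≥ 2, let 0 < δ < 1, and let A ≥ 1. Let f be a smooth real-valued function on a compact interval I = [a, b] such that the N-th derivative f^{(N)} is single-signed on I, and suppose that for all real λ ≠ 0, |∫_I e^{iλ f(x)} dx| ≤ A |λ|^{-δ}. Then there is a constant C, depending only on d, N and δ (and not on f, I, A or λ), such that for every polynomial P of degree d ≥ 2 whose derivative P′ is monic, and for all real λ ≠ 0, |∫_I e^{iλ P(f(x))} dx| ≤ C · A^{1/(1−δ)} · |λ|^{-δ/d}. -/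
open MeasureTheory
open ProbabilityTheory Set Metric

/-!
Let `ν` be the image of Lebesgue measure on `[a, b]` under `f`. The hypothesis says that the
Fourier transform of `ν` decays like `A |λ| ^ (-δ)`; averaging it against a Gaussian at scale
`1 / ε` shows that `ν` has mass at most `B ε ^ δ` on balls of radius `ε`, with `B` proportional
to `A`.

Put `ε = |λ| ^ (-1 / d)`. A function changes sign at most once where its derivative is
single-signed; descending from `f^{(N)}` and from `P^{(d + 1)} = 0` this cuts `[a, b]` into
boundedly many intervals, on each of which one of the following holds.

* `|f'| ≤ ε ^ (1 - δ) / B`. Then `f` maps the interval into a short ball, so the mass bound forces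
  the length to be at most `B ε ^ δ`.
* `|P' ∘ f| ≤ ε ^ (d - 1)`. Then `f` is within `ε` of the real part of one of the `d - 1` roots
  of `P'`, so the length is at most `(d - 1) B ε ^ δ`.
* Neither, and then `f'` and `P' ∘ f` are monotone and bounded away from zero, so the first
  derivative test gives `O(B ε ^ (δ - 1) / (|λ| ε ^ (d - 1))) = O(B ε ^ δ)`.
-/

/-! ### Fourier decay and ball growth -/

/-- `ν` satisfies the Frostman (ball growth) condition with constant `B` and exponent `δ`: balls of
radius `ε` have mass at most `B * ε ^ δ`. Finite masses are read off with `Measure.real`. -/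
def IsFrostman {X : Type*} [PseudoMetricSpace X] [MeasurableSpace X] (ν : Measure X)
    (B δ : ℝ) : Prop :=
  ∀ t : X, ∀ ε : ℝ, 0 < ε → ν.real (closedBall t ε) ≤ B * ε ^ δ

lemma IsFrostman.mono {X : Type*} [PseudoMetricSpace X] [MeasurableSpace X] {ν ν' : Measure X}
    [IsFiniteMeasure ν] {B δ : ℝ} (h : IsFrostman ν B δ) (hle : ν' ≤ ν) : IsFrostman ν' B δ :=
  fun t ε hε => (ENNReal.toReal_mono (measure_ne_top _ _) (hle _)).trans (h t ε hε)

lemma integral_charFun_comm {E : Type*} [NormedAddCommGroup E] [InnerProductSpace ℝ E]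
    [MeasurableSpace E] [BorelSpace E] [SecondCountableTopology E] (μ ν : Measure E)
    [IsFiniteMeasure μ] [IsFiniteMeasure ν] :
    ∫ x, charFun μ x ∂ν = ∫ x, charFun ν x ∂μ := by
  have hint : Integrable
      (Function.uncurry fun x y : E => Complex.exp (inner ℝ y x * Complex.I)) (ν.prod μ) :=
    .of_bound (by unfold Function.uncurry; fun_prop) 1 (.of_forall fun z => by
      simp [Function.uncurry, Complex.norm_exp_ofReal_mul_I])
  simp only [charFun_apply]
  rw [integral_integral_swap hint]
  simp only [real_inner_comm]

lemma integrable_abs_rpow_gaussianReal {s : ℝ} (hs : -1 < s) :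
    Integrable (fun x : ℝ => |x| ^ s) (gaussianReal 0 1) := by
  rw [gaussianReal_of_var_ne_zero _ one_ne_zero, integrable_withDensity_iff (by fun_prop)
    (.of_forall fun _ => gaussianPDF_lt_top)]
  have h := (integrable_rpow_mul_exp_neg_mul_sq one_half_pos hs).integrableOn (s := Ioi 0)
  have habs := ((integrable_fun_norm_addHaar (volume : Measure ℝ)
    (f := fun r => r ^ s * Real.exp (-(1 / 2) * r ^ 2))).2 (by simpa using h)).const_mul
    (Real.sqrt (2 * Real.pi))⁻¹
  refine habs.congr (.of_forall fun x => ?_)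
  simp [toReal_gaussianPDF, gaussianPDFReal_def, div_eq_inv_mul]
  ring

lemma integral_abs_rpow_gaussianReal_pos {s : ℝ} (hs : -1 < s) :
    0 < ∫ x : ℝ, |x| ^ s ∂gaussianReal 0 1 := by
  have := nullSingletonClass_gaussianReal (μ := 0) one_ne_zero
  rw [integral_pos_iff_support_of_nonneg (fun x => by positivity)
    (integrable_abs_rpow_gaussianReal hs)]
  refine (?_ : 0 < gaussianReal 0 1 {0}ᶜ).trans_le (measure_mono fun x hx => ?_)
  · rw [prob_compl_eq_one_iff (measurableSet_singleton 0) |>.2 (measure_singleton 0)]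
    exact one_pos
  · exact (Real.rpow_pos_of_pos (abs_pos.2 hx) s).ne'

lemma integral_exp_neg_sq_half_eq_integral_charFun (ν : Measure ℝ) [IsFiniteMeasure ν] (c : ℝ) :
    ((∫ x, Real.exp (-(c * x) ^ 2 / 2) ∂ν : ℝ) : ℂ) =
      ∫ s, charFun ν (c * s) ∂gaussianReal 0 1 := by
  have hcharFun (x : ℝ) :
      charFun ((gaussianReal 0 1).map (c * ·)) x = Real.exp (-(c * x) ^ 2 / 2) := by
    rw [charFun_map_mul, charFun_gaussianReal]
    push_cast
    ring_nf
  rw [← integral_map (φ := (c * ·)) (by fun_prop) (by fun_prop), ← integral_charFun_comm]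
  simp only [hcharFun, integral_complex_ofReal]

lemma norm_integral_charFun_le {ν : Measure ℝ} {A δ c : ℝ} (hδ : δ < 1)
    (hν : ∀ s ≠ 0, ‖charFun ν s‖ ≤ A * |s| ^ (-δ)) (hc : c ≠ 0) :
    ‖∫ s, charFun ν (c * s) ∂gaussianReal 0 1‖ ≤
      A * |c| ^ (-δ) * ∫ s, |s| ^ (-δ) ∂gaussianReal 0 1 := by
  have := nullSingletonClass_gaussianReal (μ := 0) one_ne_zero
  rw [← integral_const_mul]
  refine norm_integral_le_of_norm_le
    ((integrable_abs_rpow_gaussianReal (by linarith)).const_mul _) ?_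
  have hne : ∀ᵐ s ∂gaussianReal 0 1, s ≠ 0 := by simp [ae_iff]
  filter_upwards [hne] with s hs
  refine (hν _ (mul_ne_zero hc hs)).trans_eq ?_
  rw [abs_mul, Real.mul_rpow (abs_nonneg c) (abs_nonneg s), mul_assoc]

lemma exp_neg_half_mul_measureReal_closedBall_le (ν : Measure ℝ) [IsFiniteMeasure ν] {ε : ℝ}
    (hε : 0 < ε) :
    Real.exp (-(1 / 2)) * ν.real (closedBall 0 ε) ≤ ∫ x, Real.exp (-(ε⁻¹ * x) ^ 2 / 2) ∂ν := by
  have hint : Integrable (fun x => Real.exp (-(ε⁻¹ * x) ^ 2 / 2)) ν :=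
    .of_bound (by fun_prop) 1 (.of_forall fun x => by
      rw [Real.norm_eq_abs, Real.abs_exp, Real.exp_le_one_iff]
      nlinarith [sq_nonneg (ε⁻¹ * x)])
  have hsub : closedBall 0 ε ⊆ {x | Real.exp (-(1 / 2)) ≤ Real.exp (-(ε⁻¹ * x) ^ 2 / 2)} := by
    intro x hx
    have hle : |ε⁻¹ * x| ≤ 1 := by
      rw [abs_mul, abs_of_pos (by positivity : 0 < ε⁻¹), inv_mul_le_one₀ hε]
      simpa using hx
    simp only [mem_ofPred_eq, Real.exp_le_exp]
    linarith [(sq_le_one_iff_abs_le_one _).2 hle]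
  exact (mul_le_mul_of_nonneg_left (measureReal_mono hsub) (Real.exp_pos _).le).trans
    (mul_meas_ge_le_integral_of_nonneg (.of_forall fun x => (Real.exp_pos _).le) hint _)

lemma measureReal_closedBall_zero_le_of_norm_charFun_le {ν : Measure ℝ} [IsFiniteMeasure ν]
    {A δ ε : ℝ} (hδ : δ < 1) (hν : ∀ s ≠ 0, ‖charFun ν s‖ ≤ A * |s| ^ (-δ)) (hε : 0 < ε) :
    ν.real (closedBall 0 ε) ≤
      Real.exp (1 / 2) * (∫ x, |x| ^ (-δ) ∂gaussianReal 0 1) * A * ε ^ δ := by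
  have hdecay := norm_integral_charFun_le hδ hν (inv_ne_zero hε.ne')
  rw [← integral_exp_neg_sq_half_eq_integral_charFun, Complex.norm_real,
    Real.rpow_neg (abs_nonneg _), abs_inv, abs_of_pos hε, Real.inv_rpow hε.le, inv_inv] at hdecay
  have hball := (exp_neg_half_mul_measureReal_closedBall_le ν hε).trans
    ((Real.le_norm_self _).trans hdecay)
  rw [Real.exp_neg, inv_mul_le_iff₀ (Real.exp_pos _)] at hball
  linarith

lemma isFrostman_of_norm_charFun_le {ν : Measure ℝ} [IsFiniteMeasure ν] {A δ : ℝ} (hδ : δ < 1)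
    (hν : ∀ s ≠ 0, ‖charFun ν s‖ ≤ A * |s| ^ (-δ)) :
    IsFrostman ν (Real.exp (1 / 2) * (∫ x, |x| ^ (-δ) ∂gaussianReal 0 1) * A) δ := by
  intro t ε hε
  have h := measureReal_closedBall_zero_le_of_norm_charFun_le (ν := ν.map (· + -t)) hδ
    (fun s hs => by
      rw [charFun_map_add_const, norm_mul, Complex.norm_exp_ofReal_mul_I, mul_one]
      exact hν s hs) hε
  rw [map_measureReal_apply (by fun_prop) measurableSet_closedBall] at h
  convert h using 2
  ext x
  simp [Real.dist_eq, sub_eq_add_neg]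

lemma IsFrostman.nonneg {X : Type*} [PseudoMetricSpace X] [MeasurableSpace X] [Nonempty X]
    {ν : Measure X} {B δ : ℝ} (h : IsFrostman ν B δ) : 0 ≤ B := by
  simpa using measureReal_nonneg.trans (h (Classical.arbitrary X) 1 one_pos)

/-! ### Sublevel sets of derivatives and polynomials -/

lemma exists_mem_roots_norm_sub_le {K : Type*} [NormedField K] {Q : Polynomial K}
    (hsplits : Q.Splits) (hQ : Q.Monic) (hn : Q.natDegree ≠ 0) {x : K} {ε : ℝ} (hε : 0 < ε)
    (hx : ‖Q.eval x‖ ≤ ε ^ Q.natDegree) : ∃ z ∈ Q.roots, ‖x - z‖ ≤ ε := by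
  by_contra! hfar
  have hroots : Q.roots ≠ 0 := by
    rwa [← Multiset.card_pos, ← hsplits.natDegree_eq_card_roots, Nat.pos_iff_ne_zero]
  have hprod : ‖Q.eval x‖ = (Q.roots.map fun z => ‖x - z‖).prod := by
    rw [hsplits.eval_eq_prod_roots_of_monic hQ, ← normHom_apply, map_multiset_prod,
      Multiset.map_map]
    rfl
  have hlt := Multiset.prod_map_lt_prod_map hroots (fun _ => ε) _ (fun _ _ => hε) hfar
  rw [Multiset.map_const', Multiset.prod_replicate, ← hsplits.natDegree_eq_card_roots,
    ← hprod] at hlt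
  exact hlt.not_ge hx

lemma exists_finset_abs_eval_sublevel_subset {Q : Polynomial ℝ} (hQ : Q.Monic)
    (hn : Q.natDegree ≠ 0) : ∃ S : Finset ℝ, S.card ≤ Q.natDegree ∧
      ∀ ε : ℝ, 0 < ε → {x | |Q.eval x| ≤ ε ^ Q.natDegree} ⊆ ⋃ s ∈ S, closedBall s ε := by
  set R : Polynomial ℂ := Q.map (algebraMap ℝ ℂ)
  have hsplits : R.Splits := IsAlgClosed.splits R
  have hdeg : R.natDegree = Q.natDegree := Q.natDegree_map _
  refine ⟨(R.roots.map Complex.re).toFinset, ?_, fun ε hε x hx => ?_⟩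
  · refine (Multiset.toFinset_card_le _).trans ?_
    rw [Multiset.card_map, ← hsplits.natDegree_eq_card_roots, hdeg]
  · have heval : ‖R.eval (x : ℂ)‖ = |Q.eval x| := by
      rw [← Real.norm_eq_abs, ← Complex.norm_real]
      exact congrArg norm (Q.eval_map_apply (algebraMap ℝ ℂ) x)
    obtain ⟨z, hz, hxz⟩ := exists_mem_roots_norm_sub_le
      hsplits (hQ.map _) (hdeg ▸ hn) hε (x := (x : ℂ)) (by rwa [heval, hdeg])
    refine mem_biUnion (x := z.re) (by simpa using ⟨z, by simpa using hz, rfl⟩) ?_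
    exact (Complex.abs_re_le_norm (x - z)).trans hxz

lemma IsFrostman.measureReal_abs_eval_le {ν : Measure ℝ} [IsFiniteMeasure ν] {B δ ε : ℝ}
    (hν : IsFrostman ν B δ) {Q : Polynomial ℝ} (hQ : Q.Monic) (hn : Q.natDegree ≠ 0)
    (hε : 0 < ε) :
    ν.real {x | |Q.eval x| ≤ ε ^ Q.natDegree} ≤ Q.natDegree * (B * ε ^ δ) := by
  have hB := hν.nonneg
  obtain ⟨S, hcard, hS⟩ := exists_finset_abs_eval_sublevel_subset hQ hn
  calc ν.real {x | |Q.eval x| ≤ ε ^ Q.natDegree}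
      ≤ ν.real (⋃ s ∈ S, closedBall s ε) := measureReal_mono (hS ε hε) (measure_ne_top _ _)
    _ ≤ ∑ s ∈ S, ν.real (closedBall s ε) := measureReal_biUnion_finset_le _ _
    _ ≤ ∑ _s ∈ S, B * ε ^ δ := Finset.sum_le_sum fun s _ => hν s ε hε
    _ ≤ Q.natDegree * (B * ε ^ δ) := by
        rw [Finset.sum_const, nsmul_eq_mul]
        gcongr

lemma sub_le_measureReal_map {f : ℝ → ℝ} {u v : ℝ} {s : Set ℝ}
    (hf : ContinuousOn f (Icc u v)) (hs : MapsTo f (Icc u v) s) :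
    v - u ≤ ((volume.restrict (Icc u v)).map f).real s := by
  calc v - u ≤ (volume.restrict (Icc u v)).real (Icc u v) := by
        rw [measureReal_restrict_apply_self, Real.volume_real_Icc]
        exact le_max_left _ _
    _ ≤ (volume.restrict (Icc u v)).real (f ⁻¹' s) := measureReal_mono hs
    _ ≤ _ := ENNReal.toReal_mono (measure_ne_top _ _)
        (Measure.le_map_apply (hf.aemeasurable measurableSet_Icc) s)

lemma IsFrostman.sub_le_of_abs_deriv_le {f f' : ℝ → ℝ} {u v B δ ε : ℝ}
    (hν : IsFrostman ((volume.restrict (Icc u v)).map f) B δ) (hδ : δ < 1) (hB : 0 < B)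
    (hε : 0 < ε) (hf : ∀ x ∈ Icc u v, HasDerivWithinAt f (f' x) (Icc u v) x)
    (hf' : ∀ x ∈ Icc u v, |f' x| ≤ ε ^ (1 - δ) / B) :
    v - u ≤ B * ε ^ δ := by
  set η := ε ^ (1 - δ) / B with hη_def
  have hη : 0 < η := by positivity
  have hδ' : 0 < 1 - δ := sub_pos.2 hδ
  rcases le_or_gt v u with hvu | huv
  · exact (sub_nonpos.2 hvu).trans (by positivity)
  have hl : 0 < v - u := sub_pos.2 huv
  set l := v - u
  have hmaps : MapsTo f (Icc u v) (closedBall (f u) (η * l)) := fun x hx => by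
    refine ((convex_Icc u v).norm_image_sub_le_of_norm_hasDerivWithin_le hf hf'
      (left_mem_Icc.2 huv.le) hx).trans ?_
    rw [Real.norm_of_nonneg (sub_nonneg.2 hx.1)]
    gcongr
    exact sub_le_sub_right hx.2 u
  have hmass : l ≤ B * (η * l) ^ δ :=
    (sub_le_measureReal_map (HasDerivWithinAt.continuousOn hf) hmaps).trans
      (hν (f u) (η * l) (by positivity))
  have hpow : l ^ (1 - δ) ≤ (B * ε ^ δ) ^ (1 - δ) :=
    calc l ^ (1 - δ) ≤ B * η ^ δ := by
          rw [Real.rpow_sub hl, Real.rpow_one, div_le_iff₀ (by positivity)]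
          rwa [Real.mul_rpow hη.le hl.le, ← mul_assoc] at hmass
      _ = (B * ε ^ δ) ^ (1 - δ) := by
          rw [hη_def, Real.div_rpow (by positivity) hB.le, Real.mul_rpow hB.le (by positivity),
            Real.rpow_sub hB, Real.rpow_one, ← Real.rpow_mul hε.le, ← Real.rpow_mul hε.le,
            mul_comm δ]
          ring
  exact (Real.rpow_le_rpow_iff hl.le (by positivity) hδ').1 hpow

lemma IsFrostman.sub_le_of_abs_eval_le {f : ℝ → ℝ} {Q : Polynomial ℝ} {u v B δ ε : ℝ}
    (hν : IsFrostman ((volume.restrict (Icc u v)).map f) B δ) (hQ : Q.Monic)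
    (hn : Q.natDegree ≠ 0) (hε : 0 < ε) (hf : ContinuousOn f (Icc u v))
    (hsmall : ∀ x ∈ Icc u v, |Q.eval (f x)| ≤ ε ^ Q.natDegree) :
    v - u ≤ Q.natDegree * (B * ε ^ δ) :=
  (sub_le_measureReal_map hf fun x hx => hsmall x hx).trans (hν.measureReal_abs_eval_le hQ hn hε)

/-! ### Splitting an interval by signs and levels -/

/-- `g` is single-signed on `s`: it does not take values of opposite signs there. -/
def SingleSignedOn {X : Type*} (g : X → ℝ) (s : Set X) : Prop :=
  (∀ x ∈ s, 0 ≤ g x) ∨ (∀ x ∈ s, g x ≤ 0)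

namespace SingleSignedOn

variable {X : Type*} {g h : X → ℝ} {s t : Set X}

lemma mono (hg : SingleSignedOn g s) (hts : t ⊆ s) : SingleSignedOn g t :=
  hg.imp (fun hg x hx => hg x (hts hx)) (fun hg x hx => hg x (hts hx))

lemma neg (hg : SingleSignedOn g s) : SingleSignedOn (-g) s :=
  hg.symm.imp (fun hg x hx => neg_nonneg.2 (hg x hx)) (fun hg x hx => neg_nonpos.2 (hg x hx))

lemma mul (hg : SingleSignedOn g s) (hh : SingleSignedOn h s) : SingleSignedOn (g * h) s := by
  rcases hg with hg | hg <;> rcases hh with hh | hh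
  · exact .inl fun x hx => mul_nonneg (hg x hx) (hh x hx)
  · exact .inr fun x hx => mul_nonpos_of_nonneg_of_nonpos (hg x hx) (hh x hx)
  · exact .inr fun x hx => mul_nonpos_of_nonpos_of_nonneg (hg x hx) (hh x hx)
  · exact .inl fun x hx => mul_nonneg_of_nonpos_of_nonpos (hg x hx) (hh x hx)

lemma monotoneOn_or_antitoneOn {F F' : ℝ → ℝ} {D : Set ℝ} (hF' : SingleSignedOn F' D)
    (hD : Convex ℝ D) (hF : ∀ x ∈ D, HasDerivWithinAt F (F' x) D x) :
    MonotoneOn F D ∨ AntitoneOn F D := by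
  have hcont : ContinuousOn F D := HasDerivWithinAt.continuousOn hF
  have hint : ∀ x ∈ interior D, HasDerivWithinAt F (F' x) (interior D) x :=
    fun x hx => (hF x (interior_subset hx)).mono interior_subset
  exact hF'.imp
    (fun h => monotoneOn_of_hasDerivWithinAt_nonneg hD hcont hint fun x hx =>
      h x (interior_subset hx))
    (fun h => antitoneOn_of_hasDerivWithinAt_nonpos hD hcont hint fun x hx =>
      h x (interior_subset hx))

end SingleSignedOn

lemma exists_singleSignedOn_of_monotoneOn {g : ℝ → ℝ} {u v : ℝ} (huv : u ≤ v)
    (hc : ContinuousOn g (Icc u v)) (hm : MonotoneOn g (Icc u v)) :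
    ∃ c ∈ Icc u v, SingleSignedOn g (Icc u c) ∧ SingleSignedOn g (Icc c v) := by
  have hu := left_mem_Icc.2 huv
  have hv := right_mem_Icc.2 huv
  by_cases hgu : 0 ≤ g u
  · exact ⟨u, hu, .inl fun x hx => hgu.trans_eq (congrArg g (le_antisymm hx.1 hx.2)),
      .inl fun x hx => hgu.trans (hm hu hx hx.1)⟩
  by_cases hgv : g v ≤ 0
  · exact ⟨v, hv, .inr fun x hx => (hm hx hv hx.2).trans hgv,
      .inr fun x hx => (congrArg g (le_antisymm hx.2 hx.1)).trans_le hgv⟩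
  obtain ⟨c, hc, hgc⟩ := intermediate_value_Icc huv hc ⟨(not_le.1 hgu).le, (not_le.1 hgv).le⟩
  exact ⟨c, hc, .inr fun x hx => hgc ▸ hm ⟨hx.1, hx.2.trans hc.2⟩ hc hx.2,
    .inl fun x hx => hgc ▸ hm hc ⟨hc.1.trans hx.1, hx.2⟩ hx.1⟩

lemma exists_singleSignedOn_of_monotoneOn_or_antitoneOn {g : ℝ → ℝ} {u v : ℝ} (huv : u ≤ v)
    (hc : ContinuousOn g (Icc u v)) (hm : MonotoneOn g (Icc u v) ∨ AntitoneOn g (Icc u v)) :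
    ∃ c ∈ Icc u v, SingleSignedOn g (Icc u c) ∧ SingleSignedOn g (Icc c v) := by
  rcases hm with hm | hm
  · exact exists_singleSignedOn_of_monotoneOn huv hc hm
  · obtain ⟨c, hcmem, hleft, hright⟩ := exists_singleSignedOn_of_monotoneOn huv hc.neg hm.neg
    exact ⟨c, hcmem, neg_neg g ▸ hleft.neg, neg_neg g ▸ hright.neg⟩

/-- `Φ u v` is subadditive as a function of the subinterval `[u, v]` of `[a, b]`. The norm of an
integral over `[u, v]` is the motivating example: a bound over few pieces gives a bound over
`[a, b]`. -/
def SubadditiveOnIcc (Φ : ℝ → ℝ → ℝ) (a b : ℝ) : Prop :=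
  ∀ ⦃u c v : ℝ⦄, a ≤ u → u ≤ c → c ≤ v → v ≤ b → Φ u v ≤ Φ u c + Φ c v

namespace SubadditiveOnIcc

variable {Φ : ℝ → ℝ → ℝ} {g : ℝ → ℝ} {a b K : ℝ}

lemma mono (hΦ : SubadditiveOnIcc Φ a b) {u v : ℝ} (huv : u ≤ v) (hsub : Icc u v ⊆ Icc a b) :
    SubadditiveOnIcc Φ u v := fun _ _ _ h₁ h₂ h₃ h₄ =>
  hΦ ((hsub (left_mem_Icc.2 huv)).1.trans h₁) h₂ h₃ (h₄.trans (hsub (right_mem_Icc.2 huv)).2)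

lemma le_of_forall_singleSignedOn (hΦ : SubadditiveOnIcc Φ a b) (hab : a ≤ b)
    (hc : ContinuousOn g (Icc a b)) (hm : MonotoneOn g (Icc a b) ∨ AntitoneOn g (Icc a b))
    (hK : ∀ u v, u ≤ v → Icc u v ⊆ Icc a b → SingleSignedOn g (Icc u v) → Φ u v ≤ K) :
    Φ a b ≤ 2 * K := by
  obtain ⟨c, hc, hleft, hright⟩ := exists_singleSignedOn_of_monotoneOn_or_antitoneOn hab hc hm
  have := hΦ le_rfl hc.1 hc.2 le_rfl
  have := hK a c hc.1 (Icc_subset_Icc_right hc.2) hleft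
  have := hK c b hc.2 (Icc_subset_Icc_left hc.1) hright
  linarith

lemma le_of_forall_levels {α : ℝ} (hΦ : SubadditiveOnIcc Φ a b) (hab : a ≤ b)
    (hc : ContinuousOn g (Icc a b)) (hm : MonotoneOn g (Icc a b) ∨ AntitoneOn g (Icc a b))
    (hsmall : ∀ u v, u ≤ v → Icc u v ⊆ Icc a b → (∀ x ∈ Icc u v, |g x| ≤ α) → Φ u v ≤ K)
    (hlarge : ∀ u v, u ≤ v → Icc u v ⊆ Icc a b →
      ((∀ x ∈ Icc u v, α ≤ g x) ∨ ∀ x ∈ Icc u v, g x ≤ -α) → Φ u v ≤ K) :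
    Φ a b ≤ 4 * K := by
  have hshift (t : ℝ) :
      MonotoneOn (fun x => g x + t) (Icc a b) ∨ AntitoneOn (fun x => g x + t) (Icc a b) :=
    hm.imp (·.add_const t) (·.add_const t)
  suffices Φ a b ≤ 2 * (2 * K) by linarith
  refine hΦ.le_of_forall_singleSignedOn hab (g := fun x => g x + -α) (hc.add continuousOn_const)
    (hshift _) fun u v huv hsub habove => ?_
  refine (hΦ.mono huv hsub).le_of_forall_singleSignedOn huv (g := fun x => g x + α)
    ((hc.mono hsub).add continuousOn_const) ((hshift _).imp (·.mono hsub) (·.mono hsub))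
    fun u' v' huv' hsub' hbelow => ?_
  rcases habove.mono hsub' with habove | habove
  · exact hlarge u' v' huv' (hsub'.trans hsub) (.inl fun x hx => by linarith [habove x hx])
  rcases hbelow with hbelow | hbelow
  · exact hsmall u' v' huv' (hsub'.trans hsub) fun x hx =>
      abs_le.2 ⟨by linarith [hbelow x hx], by linarith [habove x hx]⟩
  · exact hlarge u' v' huv' (hsub'.trans hsub) (.inr fun x hx => by linarith [hbelow x hx])

lemma le_of_hasDerivWithinAt_chain {F : ℕ → ℝ → ℝ} {w : ℝ → ℝ} {n : ℕ}
    (hΦ : SubadditiveOnIcc Φ a b) (hab : a ≤ b)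
    (hF : ∀ k < n, ∀ x ∈ Icc a b, HasDerivWithinAt (F k) (F (k + 1) x * w x) (Icc a b) x)
    (hw : SingleSignedOn w (Icc a b)) (hFn : SingleSignedOn (F n) (Icc a b))
    (hK : ∀ u v, u ≤ v → Icc u v ⊆ Icc a b → SingleSignedOn (F 0) (Icc u v) → Φ u v ≤ K) :
    Φ a b ≤ 2 ^ n * K := by
  induction n generalizing a b with
  | zero => simpa using hK a b hab subset_rfl hFn
  | succ n ih =>
    have hFn' := hF n n.lt_succ_self
    rw [pow_succ', mul_assoc]
    refine hΦ.le_of_forall_singleSignedOn hab (HasDerivWithinAt.continuousOn hFn')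
      ((hFn.mul hw).monotoneOn_or_antitoneOn (convex_Icc a b) hFn') fun u v huv hsub hsign => ?_
    exact ih (hΦ.mono huv hsub) huv
      (fun k hk x hx => (hF k (hk.trans n.lt_succ_self) x (hsub hx)).mono hsub) (hw.mono hsub)
      hsign fun u' v' huv' hsub' => hK u' v' huv' (hsub'.trans hsub)

end SubadditiveOnIcc

/-! ### The first derivative test -/

/-- The oscillatory integral with phase `φ` over the interval from `u` to `v`. -/
noncomputable def oscIntegral (φ : ℝ → ℝ) (u v : ℝ) : ℂ :=
  ∫ x in u..v, Complex.exp (Complex.I * φ x)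

lemma norm_oscIntegral_le_sub {φ : ℝ → ℝ} {u v : ℝ} (huv : u ≤ v) :
    ‖oscIntegral φ u v‖ ≤ v - u := by
  have h := intervalIntegral.norm_integral_le_of_norm_le_const (a := u) (b := v) (C := 1)
    (f := fun x => Complex.exp (Complex.I * φ x)) fun x _ => (Complex.norm_exp_I_mul_ofReal _).le
  rwa [one_mul, abs_of_nonneg (sub_nonneg.2 huv)] at h

lemma subadditiveOnIcc_norm_oscIntegral {φ : ℝ → ℝ} {a b : ℝ} (hφ : ContinuousOn φ (Icc a b)) :
    SubadditiveOnIcc (fun u v => ‖oscIntegral φ u v‖) a b := by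
  intro u c v hau huc hcv hvb
  have hcont : ContinuousOn (fun x => Complex.exp (Complex.I * φ x)) (Icc a b) := by fun_prop
  have hleft := (hcont.mono (Icc_subset_Icc hau (hcv.trans hvb))).intervalIntegrable_of_Icc
    (μ := volume) huc
  have hright := (hcont.mono (Icc_subset_Icc (hau.trans huc) hvb)).intervalIntegrable_of_Icc
    (μ := volume) hcv
  simp only [oscIntegral]
  rw [← intervalIntegral.integral_add_adjacent_intervals hleft hright]
  exact norm_add_le _ _

lemma integral_abs_deriv_le_two_mul {p p' : ℝ → ℝ} {u v M : ℝ} (huv : u ≤ v)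
    (hp : ∀ x ∈ Icc u v, HasDerivWithinAt p (p' x) (Icc u v) x)
    (hp' : ContinuousOn p' (Icc u v)) (hsign : SingleSignedOn p' (Icc u v))
    (hM : ∀ x ∈ Icc u v, |p x| ≤ M) :
    ∫ x in u..v, |p' x| ≤ 2 * M := by
  have hftc : ∫ x in u..v, p' x = p v - p u :=
    intervalIntegral.integral_eq_sub_of_hasDerivAt_of_le huv
      (HasDerivWithinAt.continuousOn hp)
      (fun x hx => (hp x (Ioo_subset_Icc_self hx)).hasDerivAt (Icc_mem_nhds hx.1 hx.2))
      (hp'.intervalIntegrable_of_Icc huv)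
  have habs : ∫ x in u..v, |p' x| = |∫ x in u..v, p' x| := by
    rcases hsign with hsign | hsign
    · rw [abs_of_nonneg (intervalIntegral.integral_nonneg huv hsign)]
      exact intervalIntegral.integral_congr fun x hx =>
        abs_of_nonneg (hsign x (uIcc_of_le huv ▸ hx))
    · rw [← abs_neg, ← intervalIntegral.integral_neg,
        abs_of_nonneg (intervalIntegral.integral_nonneg huv fun x hx =>
          neg_nonneg.2 (hsign x hx))]
      exact intervalIntegral.integral_congr fun x hx =>
        abs_of_nonpos (hsign x (uIcc_of_le huv ▸ hx))
  rw [habs, hftc, two_mul]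
  exact (abs_sub _ _).trans
    (add_le_add (hM v (right_mem_Icc.2 huv)) (hM u (left_mem_Icc.2 huv)))

lemma norm_oscIntegral_le_of_mul_deriv_eq_one {φ φ' r r' : ℝ → ℝ} {u v : ℝ} (huv : u ≤ v)
    (hφ : ∀ x ∈ Icc u v, HasDerivWithinAt φ (φ' x) (Icc u v) x)
    (hr : ∀ x ∈ Icc u v, HasDerivWithinAt r (r' x) (Icc u v) x)
    (hr' : ContinuousOn r' (Icc u v)) (hrφ : ∀ x ∈ Icc u v, r x * φ' x = 1) :
    ‖oscIntegral φ u v‖ ≤ |r u| + |r v| + ∫ x in u..v, |r' x| := by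
  set e : ℝ → ℂ := fun x => Complex.exp (Complex.I * φ x) with he
  have hnorm (x : ℝ) : ‖e x‖ = 1 := Complex.norm_exp_I_mul_ofReal _
  have hφc : ContinuousOn φ (Icc u v) := HasDerivWithinAt.continuousOn hφ
  have hec : ContinuousOn e (Icc u v) := by fun_prop
  have hder : ∀ x ∈ Icc u v, HasDerivWithinAt (fun y => (r y : ℂ) * e y)
      (r' x * e x + Complex.I * e x) (Icc u v) x := fun x hx => by
    have hrφ' : (r x : ℂ) * φ' x = 1 := mod_cast hrφ x hx
    refine ((hr x hx).ofReal_comp.mul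
      ((hφ x hx).ofReal_comp.const_mul Complex.I).cexp).congr_deriv ?_
    linear_combination (Complex.I * e x) * hrφ'
  have hint₁ : IntervalIntegrable (fun x => (r' x : ℂ) * e x) volume u v :=
    ContinuousOn.intervalIntegrable_of_Icc huv (by fun_prop)
  have hint₂ : IntervalIntegrable (fun x => Complex.I * e x) volume u v :=
    ContinuousOn.intervalIntegrable_of_Icc huv (by fun_prop)
  have hparts := intervalIntegral.integral_eq_sub_of_hasDerivAt_of_le huv
    (HasDerivWithinAt.continuousOn hder)
    (fun x hx => (hder x (Ioo_subset_Icc_self hx)).hasDerivAt (Icc_mem_nhds hx.1 hx.2))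
    (hint₁.add hint₂)
  rw [intervalIntegral.integral_add hint₁ hint₂, intervalIntegral.integral_const_mul] at hparts
  have hremainder : ‖∫ x in u..v, r' x * e x‖ ≤ ∫ x in u..v, |r' x| :=
    (intervalIntegral.norm_integral_le_integral_norm huv).trans_eq (by simp [hnorm])
  calc ‖oscIntegral φ u v‖ = ‖Complex.I * ∫ x in u..v, e x‖ := by simp [oscIntegral, he]
    _ = ‖r v * e v - r u * e u - ∫ x in u..v, r' x * e x‖ := by
        rw [eq_sub_of_add_eq' hparts]
    _ ≤ ‖r v * e v‖ + ‖r u * e u‖ + ‖∫ x in u..v, r' x * e x‖ :=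
        (norm_sub_le _ _).trans (add_le_add_left (norm_sub_le _ _) _)
    _ ≤ |r u| + |r v| + ∫ x in u..v, |r' x| := by
        simp only [norm_mul, hnorm, mul_one, Complex.norm_real, Real.norm_eq_abs]
        linarith

lemma integral_abs_deriv_mul_le_four_mul {p p' q q' : ℝ → ℝ} {u v M L : ℝ} (huv : u ≤ v)
    (hp : ∀ x ∈ Icc u v, HasDerivWithinAt p (p' x) (Icc u v) x)
    (hp' : ContinuousOn p' (Icc u v)) (hpsign : SingleSignedOn p' (Icc u v))
    (hM : ∀ x ∈ Icc u v, |p x| ≤ M)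
    (hq : ∀ x ∈ Icc u v, HasDerivWithinAt q (q' x) (Icc u v) x)
    (hq' : ContinuousOn q' (Icc u v)) (hqsign : SingleSignedOn q' (Icc u v))
    (hL : ∀ x ∈ Icc u v, |q x| ≤ L) :
    ∫ x in u..v, |p' x * q x + p x * q' x| ≤ 4 * (M * L) := by
  have hM0 : 0 ≤ M := (abs_nonneg _).trans (hM u (left_mem_Icc.2 huv))
  have hL0 : 0 ≤ L := (abs_nonneg _).trans (hL u (left_mem_Icc.2 huv))
  have hpc : ContinuousOn p (Icc u v) := HasDerivWithinAt.continuousOn hp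
  have hqc : ContinuousOn q (Icc u v) := HasDerivWithinAt.continuousOn hq
  have hint {F : ℝ → ℝ} (hF : ContinuousOn F (Icc u v)) : IntervalIntegrable F volume u v :=
    hF.intervalIntegrable_of_Icc huv
  calc ∫ x in u..v, |p' x * q x + p x * q' x|
      ≤ ∫ x in u..v, (|p' x| * L + M * |q' x|) := by
        refine intervalIntegral.integral_mono_on huv (hint (by fun_prop)) (hint (by fun_prop))
          fun x hx => (abs_add_le _ _).trans ?_
        rw [abs_mul, abs_mul]
        gcongr
        exacts [hL x hx, hM x hx]
    _ = (∫ x in u..v, |p' x|) * L + M * ∫ x in u..v, |q' x| := by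
        rw [intervalIntegral.integral_add (hint (by fun_prop)) (hint (by fun_prop)),
          intervalIntegral.integral_mul_const, intervalIntegral.integral_const_mul]
    _ ≤ 2 * M * L + M * (2 * L) := by
        gcongr
        exacts [integral_abs_deriv_le_two_mul huv hp hp' hpsign hM,
          integral_abs_deriv_le_two_mul huv hq hq' hqsign hL]
    _ = 4 * (M * L) := by ring

lemma SingleSignedOn.neg_div_sq {X : Type*} {g g' : X → ℝ} {s : Set X}
    (hg' : SingleSignedOn g' s) : SingleSignedOn (fun x => -g' x / g x ^ 2) s := by
  have hinv : SingleSignedOn (fun x => (g x ^ 2)⁻¹) s := .inl fun x _ => by positivity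
  simpa only [div_eq_mul_inv] using! hg'.neg.mul hinv

lemma norm_oscIntegral_le_of_le_abs_deriv_factors {φ g g' h h' : ℝ → ℝ} {u v α β : ℝ}
    (huv : u ≤ v) (hα : 0 < α) (hβ : 0 < β)
    (hφ : ∀ x ∈ Icc u v, HasDerivWithinAt φ (g x * h x) (Icc u v) x)
    (hg : ∀ x ∈ Icc u v, HasDerivWithinAt g (g' x) (Icc u v) x)
    (hg' : ContinuousOn g' (Icc u v)) (hgsign : SingleSignedOn g' (Icc u v))
    (hgα : ∀ x ∈ Icc u v, α ≤ |g x|)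
    (hh : ∀ x ∈ Icc u v, HasDerivWithinAt h (h' x) (Icc u v) x)
    (hh' : ContinuousOn h' (Icc u v)) (hhsign : SingleSignedOn h' (Icc u v))
    (hhβ : ∀ x ∈ Icc u v, β ≤ |h x|) :
    ‖oscIntegral φ u v‖ ≤ 6 * (α⁻¹ * β⁻¹) := by
  have hgne : ∀ x ∈ Icc u v, g x ≠ 0 := fun x hx => abs_pos.1 (hα.trans_le (hgα x hx))
  have hhne : ∀ x ∈ Icc u v, h x ≠ 0 := fun x hx => abs_pos.1 (hβ.trans_le (hhβ x hx))
  have hgc : ContinuousOn g (Icc u v) := HasDerivWithinAt.continuousOn hg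
  have hhc : ContinuousOn h (Icc u v) := HasDerivWithinAt.continuousOn hh
  have hp := fun x hx => (hg x hx).fun_inv (hgne x hx)
  have hq := fun x hx => (hh x hx).fun_inv (hhne x hx)
  have hp' : ContinuousOn (fun x => -g' x / g x ^ 2) (Icc u v) :=
    hg'.neg.div (hgc.pow 2) fun x hx => pow_ne_zero 2 (hgne x hx)
  have hq' : ContinuousOn (fun x => -h' x / h x ^ 2) (Icc u v) :=
    hh'.neg.div (hhc.pow 2) fun x hx => pow_ne_zero 2 (hhne x hx)
  have hpα : ∀ x ∈ Icc u v, |(g x)⁻¹| ≤ α⁻¹ := fun x hx =>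
    (abs_inv _).trans_le (inv_anti₀ hα (hgα x hx))
  have hqβ : ∀ x ∈ Icc u v, |(h x)⁻¹| ≤ β⁻¹ := fun x hx =>
    (abs_inv _).trans_le (inv_anti₀ hβ (hhβ x hx))
  have hboundary : ∀ x ∈ Icc u v, |(g x)⁻¹ * (h x)⁻¹| ≤ α⁻¹ * β⁻¹ := fun x hx => by
    rw [abs_mul]
    gcongr
    exacts [hpα x hx, hqβ x hx]
  have hosc := norm_oscIntegral_le_of_mul_deriv_eq_one huv hφ
    (fun x hx => (hp x hx).fun_mul (hq x hx))
    ((hp'.mul (hhc.inv₀ hhne)).add ((hgc.inv₀ hgne).mul hq'))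
    (fun x hx => by field_simp [hgne x hx, hhne x hx])
  have hvariation := integral_abs_deriv_mul_le_four_mul huv hp hp' hgsign.neg_div_sq hpα hq hq'
    hhsign.neg_div_sq hqβ
  linarith [hboundary u (left_mem_Icc.2 huv), hboundary v (right_mem_Icc.2 huv)]

/-! ### Phases of the form `P ∘ f` -/

lemma IsFrostman.map_restrict_mono {X Y : Type*} [MeasurableSpace X] [PseudoMetricSpace Y]
    [MeasurableSpace Y] {μ : Measure X} {s t : Set X} [IsFiniteMeasure (μ.restrict t)]
    {f : X → Y} {B δ : ℝ} (hν : IsFrostman ((μ.restrict t).map f) B δ)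
    (hf : AEMeasurable f (μ.restrict t)) (hst : s ⊆ t) :
    IsFrostman ((μ.restrict s).map f) B δ :=
  hν.mono (Measure.map_mono_of_aemeasurable (Measure.restrict_mono hst le_rfl) hf)

lemma hasDerivWithinAt_eval_comp {𝕜 : Type*} [NontriviallyNormedField 𝕜] (P : Polynomial 𝕜)
    {f : 𝕜 → 𝕜} {f' x : 𝕜} {s : Set 𝕜}
    (hf : HasDerivWithinAt f f' s x) :
    HasDerivWithinAt (fun y => P.eval (f y)) (P.derivative.eval (f x) * f') s x :=
  (P.hasDerivAt (f x)).comp_hasDerivWithinAt x hf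

lemma norm_oscIntegral_eval_le_of_le_abs {f f' f'' : ℝ → ℝ} {P : Polynomial ℝ}
    {u v B δ ε lam : ℝ} (huv : u ≤ v) (hB : 0 < B) (hε : 0 < ε) (hd : P.natDegree ≠ 0)
    (hlam : |lam| * ε ^ P.natDegree = 1)
    (hf : ∀ x ∈ Icc u v, HasDerivWithinAt f (f' x) (Icc u v) x)
    (hf' : ∀ x ∈ Icc u v, HasDerivWithinAt f' (f'' x) (Icc u v) x)
    (hf'' : ContinuousOn f'' (Icc u v)) (hf''sign : SingleSignedOn f'' (Icc u v))
    (hPsign : SingleSignedOn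
      (fun x => P.derivative.derivative.eval (f x) * f' x) (Icc u v))
    (hf'large : ∀ x ∈ Icc u v, ε ^ (1 - δ) / B ≤ |f' x|)
    (hPlarge : ∀ x ∈ Icc u v, ε ^ (P.natDegree - 1) ≤ |P.derivative.eval (f x)|) :
    ‖oscIntegral (fun x => lam * P.eval (f x)) u v‖ ≤ 6 * (B * ε ^ δ) := by
  have hfc : ContinuousOn f (Icc u v) := HasDerivWithinAt.continuousOn hf
  have hf'c : ContinuousOn f' (Icc u v) := HasDerivWithinAt.continuousOn hf'
  have hlamε : |lam| * ε ^ (P.natDegree - 1) = ε⁻¹ := by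
    refine eq_inv_of_mul_eq_one_left ?_
    rw [mul_assoc, pow_sub_one_mul hd, hlam]
  have hconst : SingleSignedOn (fun _ => lam) (Icc u v) :=
    (le_total 0 lam).imp (fun h _ _ => h) (fun h _ _ => h)
  calc ‖oscIntegral (fun x => lam * P.eval (f x)) u v‖
      ≤ 6 * ((ε⁻¹)⁻¹ * (ε ^ (1 - δ) / B)⁻¹) :=
        norm_oscIntegral_le_of_le_abs_deriv_factors huv (by positivity) (by positivity)
          (fun x hx => by
            simpa only [mul_assoc] using (hasDerivWithinAt_eval_comp P (hf x hx)).const_mul lam)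
          (fun x hx => (hasDerivWithinAt_eval_comp P.derivative (hf x hx)).const_mul lam)
          (by fun_prop) (hconst.mul hPsign)
          (fun x hx => by
            rw [abs_mul, ← hlamε]
            exact mul_le_mul_of_nonneg_left (hPlarge x hx) (abs_nonneg lam))
          hf' hf'' hf''sign hf'large
    _ = 6 * (B * ε ^ δ) := by
        rw [Real.rpow_sub hε, Real.rpow_one]
        field_simp

lemma IsFrostman.norm_oscIntegral_eval_le_of_le_abs_deriv {f f' f'' : ℝ → ℝ}
    {P : Polynomial ℝ} {u v B δ ε lam : ℝ}
    (hν : IsFrostman ((volume.restrict (Icc u v)).map f) B δ) (huv : u ≤ v) (hB : 0 < B)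
    (hε : 0 < ε) (hP : P.derivative.Monic) (hd : 2 ≤ P.natDegree)
    (hlam : |lam| * ε ^ P.natDegree = 1)
    (hf : ∀ x ∈ Icc u v, HasDerivWithinAt f (f' x) (Icc u v) x)
    (hf' : ∀ x ∈ Icc u v, HasDerivWithinAt f' (f'' x) (Icc u v) x)
    (hf'' : ContinuousOn f'' (Icc u v)) (hf''sign : SingleSignedOn f'' (Icc u v))
    (hPsign : SingleSignedOn
      (fun x => P.derivative.derivative.eval (f x) * f' x) (Icc u v))
    (hf'large : ∀ x ∈ Icc u v, ε ^ (1 - δ) / B ≤ |f' x|) :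
    ‖oscIntegral (fun x => lam * P.eval (f x)) u v‖ ≤
      4 * (6 * P.natDegree * (B * ε ^ δ)) := by
  have hfc : ContinuousOn f (Icc u v) := HasDerivWithinAt.continuousOn hf
  have hdeg : P.derivative.natDegree = P.natDegree - 1 := P.natDegree_derivative
  have hPf' := fun x hx => hasDerivWithinAt_eval_comp P.derivative (hf x hx)
  have hPf : ContinuousOn (fun x => lam * P.eval (f x)) (Icc u v) := by fun_prop
  have hd1 : (1 : ℝ) ≤ P.natDegree := by exact_mod_cast one_le_two.trans hd
  refine (subadditiveOnIcc_norm_oscIntegral hPf).le_of_forall_levels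
    (g := fun x => P.derivative.eval (f x)) (α := ε ^ P.derivative.natDegree) huv (by fun_prop)
    (hPsign.monotoneOn_or_antitoneOn (convex_Icc u v) hPf') ?_ ?_
  · intro s t hst hsub hsmall
    have hνst := hν.map_restrict_mono (hfc.aemeasurable measurableSet_Icc) hsub
    calc ‖oscIntegral (fun x => lam * P.eval (f x)) s t‖ ≤ t - s := norm_oscIntegral_le_sub hst
      _ ≤ P.derivative.natDegree * (B * ε ^ δ) :=
          hνst.sub_le_of_abs_eval_le hP (by omega) hε (hfc.mono hsub) hsmall
      _ ≤ 6 * P.natDegree * (B * ε ^ δ) := by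
          gcongr
          exact_mod_cast (by omega : P.derivative.natDegree ≤ 6 * P.natDegree)
  · intro s t hst hsub hlarge
    rw [hdeg] at hlarge
    calc ‖oscIntegral (fun x => lam * P.eval (f x)) s t‖ ≤ 6 * (B * ε ^ δ) :=
          norm_oscIntegral_eval_le_of_le_abs hst hB hε (by omega) hlam
            (fun x hx => (hf x (hsub hx)).mono hsub) (fun x hx => (hf' x (hsub hx)).mono hsub)
            (hf''.mono hsub) (hf''sign.mono hsub) (hPsign.mono hsub)
            (fun x hx => hf'large x (hsub hx))
            (fun x hx => le_abs.2 (hlarge.imp (· x hx) fun h => le_neg.2 (h x hx)))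
      _ ≤ 6 * P.natDegree * (B * ε ^ δ) := by
          gcongr
          linarith

lemma SubadditiveOnIcc.le_of_forall_singleSignedOn_eval {Φ : ℝ → ℝ → ℝ} {f f' : ℝ → ℝ}
    {a b K : ℝ} (hΦ : SubadditiveOnIcc Φ a b) (hab : a ≤ b) (Q : Polynomial ℝ)
    (hf : ∀ x ∈ Icc a b, HasDerivWithinAt f (f' x) (Icc a b) x)
    (hf'sign : SingleSignedOn f' (Icc a b))
    (hK : ∀ u v, u ≤ v → Icc u v ⊆ Icc a b →
      SingleSignedOn (fun x => Q.eval (f x)) (Icc u v) → Φ u v ≤ K) :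
    Φ a b ≤ 2 ^ (Q.natDegree + 1) * K := by
  refine hΦ.le_of_hasDerivWithinAt_chain hab
    (F := fun k x => (Polynomial.derivative^[k] Q).eval (f x)) (fun k _ x hx => ?_) hf'sign ?_ hK
  · rw [Function.iterate_succ_apply']
    exact hasDerivWithinAt_eval_comp _ (hf x hx)
  · rw [Polynomial.iterate_derivative_eq_zero Q.natDegree.lt_succ_self]
    exact .inl fun x _ => by simp

lemma IsFrostman.norm_oscIntegral_eval_le_of_singleSignedOn {f f' f'' : ℝ → ℝ}
    {P : Polynomial ℝ} {u v B δ ε lam : ℝ}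
    (hν : IsFrostman ((volume.restrict (Icc u v)).map f) B δ) (huv : u ≤ v) (hδ : δ < 1)
    (hB : 0 < B) (hε : 0 < ε) (hP : P.derivative.Monic) (hd : 2 ≤ P.natDegree)
    (hlam : |lam| * ε ^ P.natDegree = 1)
    (hf : ∀ x ∈ Icc u v, HasDerivWithinAt f (f' x) (Icc u v) x)
    (hf' : ∀ x ∈ Icc u v, HasDerivWithinAt f' (f'' x) (Icc u v) x)
    (hf'' : ContinuousOn f'' (Icc u v)) (hf''sign : SingleSignedOn f'' (Icc u v)) :
    ‖oscIntegral (fun x => lam * P.eval (f x)) u v‖ ≤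
      4 * (2 ^ (P.derivative.derivative.natDegree + 1) *
        (4 * (6 * P.natDegree * (B * ε ^ δ)))) := by
  have hfc : ContinuousOn f (Icc u v) := HasDerivWithinAt.continuousOn hf
  have hf'c : ContinuousOn f' (Icc u v) := HasDerivWithinAt.continuousOn hf'
  have hΦ := subadditiveOnIcc_norm_oscIntegral
    (show ContinuousOn (fun x => lam * P.eval (f x)) (Icc u v) by fun_prop)
  have hfrostman {s t : ℝ} (hsub : Icc s t ⊆ Icc u v) :=
    hν.map_restrict_mono (hfc.aemeasurable measurableSet_Icc) hsub
  refine hΦ.le_of_forall_levels (g := f') (α := ε ^ (1 - δ) / B) huv hf'c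
    (hf''sign.monotoneOn_or_antitoneOn (convex_Icc u v) hf') ?_ ?_
  · intro s t hst hsub hsmall
    have hd1 : (1 : ℝ) ≤ P.natDegree := by exact_mod_cast one_le_two.trans hd
    have hpow : (1 : ℝ) ≤ 2 ^ (P.derivative.derivative.natDegree + 1) := one_le_pow₀ one_le_two
    calc ‖oscIntegral (fun x => lam * P.eval (f x)) s t‖ ≤ t - s := norm_oscIntegral_le_sub hst
      _ ≤ B * ε ^ δ := (hfrostman hsub).sub_le_of_abs_deriv_le hδ hB hε
          (fun x hx => (hf x (hsub hx)).mono hsub) hsmall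
      _ ≤ 1 * (4 * (6 * 1 * (B * ε ^ δ))) := by linarith [show 0 < B * ε ^ δ by positivity]
      _ ≤ 2 ^ (P.derivative.derivative.natDegree + 1) *
          (4 * (6 * P.natDegree * (B * ε ^ δ))) := by gcongr
  · intro s t hst hsub hlarge
    have hα : 0 ≤ ε ^ (1 - δ) / B := by positivity
    have hf'sign : SingleSignedOn f' (Icc s t) :=
      hlarge.imp (fun h x hx => hα.trans (h x hx))
        (fun h x hx => (h x hx).trans (neg_nonpos.2 hα))
    refine (hΦ.mono hst hsub).le_of_forall_singleSignedOn_eval hst P.derivative.derivative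
      (fun x hx => (hf x (hsub hx)).mono hsub) hf'sign fun s' t' hst' hsub' hP''sign => ?_
    replace hsub := hsub'.trans hsub
    exact (hfrostman hsub).norm_oscIntegral_eval_le_of_le_abs_deriv hst' hB hε hP hd hlam
      (fun x hx => (hf x (hsub hx)).mono hsub) (fun x hx => (hf' x (hsub hx)).mono hsub)
      (hf''.mono hsub) (hf''sign.mono hsub) (hP''sign.mul (hf'sign.mono hsub'))
      fun x hx => le_abs.2 (hlarge.imp (· x (hsub' hx)) fun h => le_neg.2 (h x (hsub' hx)))

lemma hasDerivWithinAt_iteratedDerivWithin {𝕜 E : Type*} [NontriviallyNormedField 𝕜]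
    [NormedAddCommGroup E] [NormedSpace 𝕜 E] {n : WithTop ℕ∞} {k : ℕ} {f : 𝕜 → E} {s : Set 𝕜}
    (hf : ContDiffOn 𝕜 n f s) (hk : k < n) (hs : UniqueDiffOn 𝕜 s) {x : 𝕜} (hx : x ∈ s) :
    HasDerivWithinAt (iteratedDerivWithin k f s) (iteratedDerivWithin (k + 1) f s x) s x := by
  rw [iteratedDerivWithin_succ]
  exact (hf.differentiableOn_iteratedDerivWithin hk hs x hx).hasDerivWithinAt

lemma IsFrostman.norm_oscIntegral_eval_le {f : ℝ → ℝ} {P : Polynomial ℝ}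
    {a b B δ ε lam : ℝ} {N : ℕ}
    (hν : IsFrostman ((volume.restrict (Icc a b)).map f) B δ) (hab : a < b) (hδ : δ < 1)
    (hB : 0 < B) (hε : 0 < ε) (hP : P.derivative.Monic) (hd : 2 ≤ P.natDegree)
    (hlam : |lam| * ε ^ P.natDegree = 1) (hN : 2 ≤ N) (hf : ContDiffOn ℝ N f (Icc a b))
    (hsign : SingleSignedOn (iteratedDerivWithin N f (Icc a b)) (Icc a b)) :
    ‖oscIntegral (fun x => lam * P.eval (f x)) a b‖ ≤
      2 ^ (N + P.natDegree + 1) * (6 * P.natDegree * (B * ε ^ δ)) := by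
  have hs := uniqueDiffOn_Icc hab
  have hfc : ContinuousOn f (Icc a b) := hf.continuousOn
  have hPf : ContinuousOn (fun x => lam * P.eval (f x)) (Icc a b) := by fun_prop
  have hder (k : ℕ) (hk : k < N) (x : ℝ) (hx : x ∈ Icc a b) :=
    hasDerivWithinAt_iteratedDerivWithin hf (mod_cast hk) hs hx
  have hchain := (subadditiveOnIcc_norm_oscIntegral hPf).le_of_hasDerivWithinAt_chain
    (F := fun k => iteratedDerivWithin (k + 2) f (Icc a b)) (w := 1) (n := N - 2) hab.le
    (fun k hk x hx => by simpa using hder (k + 2) (by omega) x hx)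
    (.inl fun _ _ => zero_le_one) (by rwa [Nat.sub_add_cancel hN])
    fun u v huv hsub hf''sign =>
      (hν.map_restrict_mono (hfc.aemeasurable measurableSet_Icc) hsub
        ).norm_oscIntegral_eval_le_of_singleSignedOn huv hδ hB hε hP hd hlam
        (fun x hx => by simpa using (hder 0 (by omega) x (hsub hx)).mono hsub)
        (fun x hx => (hder 1 (by omega) x (hsub hx)).mono hsub)
        ((hf.continuousOn_iteratedDerivWithin (mod_cast hN) hs).mono hsub) hf''sign
  refine hchain.trans_eq ?_
  obtain ⟨n, rfl⟩ := Nat.exists_eq_add_of_le' hN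
  obtain ⟨m, hm⟩ := Nat.exists_eq_add_of_le' hd
  simp only [Polynomial.natDegree_derivative, hm, Nat.add_sub_cancel, Nat.add_succ_sub_one]
  ring

lemma charFun_map_restrict_Icc {f : ℝ → ℝ} {a b : ℝ} (hf : ContinuousOn f (Icc a b)) (s : ℝ) :
    charFun ((volume.restrict (Icc a b)).map f) s =
      ∫ x in Icc a b, Complex.exp (Complex.I * s * f x) := by
  rw [charFun_apply_real, integral_map (hf.aemeasurable measurableSet_Icc) (by fun_prop)]
  simp only [mul_comm Complex.I, mul_right_comm]

lemma oscIntegral_const_mul_eq_setIntegral {a b : ℝ} (hab : a ≤ b) (lam : ℝ) (g : ℝ → ℝ) :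
    oscIntegral (fun x => lam * g x) a b =
      ∫ x in Icc a b, Complex.exp (Complex.I * (lam : ℂ) * (g x : ℂ)) := by
  rw [oscIntegral, intervalIntegral.integral_of_le hab, integral_Icc_eq_integral_Ioc]
  push_cast
  simp only [mul_assoc]

theorem stmt_1_general (N d : ℕ) (hN : 2 ≤ N) (hd : 2 ≤ d) (δ : ℝ) (hδ1 : δ < 1) :
    ∃ C : ℝ, 0 < C ∧
      ∀ (a b : ℝ) (f : ℝ → ℝ), ContDiffOn ℝ N f (Icc a b) →
      SingleSignedOn (iteratedDerivWithin N f (Icc a b)) (Icc a b) →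
      ∀ A : ℝ, 0 < A →
      (∀ lam : ℝ, lam ≠ 0 →
        ‖∫ x in Icc a b, Complex.exp (Complex.I * (lam : ℂ) * (f x : ℂ))‖ ≤ A * |lam| ^ (-δ)) →
      ∀ P : Polynomial ℝ, P.natDegree = d → P.derivative.Monic →
      ∀ lam : ℝ, lam ≠ 0 →
        ‖∫ x in Icc a b, Complex.exp (Complex.I * (lam : ℂ) * ((P.eval (f x) : ℝ) : ℂ))‖ ≤
          C * A * |lam| ^ (-(δ / (d : ℝ))) := by
  set c := Real.exp (1 / 2) * ∫ x, |x| ^ (-δ) ∂gaussianReal 0 1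
  have hc : 0 < c := mul_pos (Real.exp_pos _) (integral_abs_rpow_gaussianReal_pos (by linarith))
  refine ⟨2 ^ (N + d + 1) * (6 * d * c), by positivity, ?_⟩
  intro a b f hf hsign A hA hdecay P hPd hP lam hlam
  rcases le_or_gt b a with hba | hab
  · rw [setIntegral_measure_zero _ (by simp [hba]), norm_zero]
    positivity
  have hν : IsFrostman ((volume.restrict (Icc a b)).map f) (c * A) δ :=
    isFrostman_of_norm_charFun_le hδ1 fun s hs => by
      rw [charFun_map_restrict_Icc hf.continuousOn]
      exact hdecay s hs
  have hl : 0 < |lam| := abs_pos.2 hlam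
  set ε := |lam| ^ (-(1 / d : ℝ))
  have hεd : |lam| * ε ^ d = 1 := by
    rw [← Real.rpow_mul_natCast hl.le, neg_mul, one_div_mul_cancel (by positivity),
      Real.rpow_neg_one, mul_inv_cancel₀ hl.ne']
  have hεδ : ε ^ δ = |lam| ^ (-(δ / d)) := by
    rw [← Real.rpow_mul hl.le]
    ring_nf
  have hmain := hν.norm_oscIntegral_eval_le (ε := ε) (lam := lam) (P := P) hab hδ1 (by positivity)
    (by positivity) hP (hPd ▸ hd) (hPd ▸ hεd) hN hf hsign
  rw [oscIntegral_const_mul_eq_setIntegral hab.le, hPd, hεδ] at hmain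
  exact hmain.trans_eq (by ring)

/-- Let `N ≥ 2`, `0 < δ < 1`, `A ≥ 1`. If `f` is smooth on `I = [a, b]`
with `f^{(N)}` single-signed on `I`, and `|∫_I e^{iλ f}| ≤ A |λ|^{-δ}` for all `λ ≠ 0`,
then there is a constant `C = C(d, N, δ)` such that for every polynomial `P` of degree
`d ≥ 2` with `P'` monic, and all `λ ≠ 0`,
`|∫_I e^{iλ P(f)}| ≤ C · A^{1/(1-δ)} · |λ|^{-δ/d}`. -/
theorem stmt_1 (N d : ℕ) (hN : 2 ≤ N) (hd : 2 ≤ d) (δ : ℝ) (hδ0 : 0 < δ) (hδ1 : δ < 1) :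
    ∃ C : ℝ, 0 < C ∧
      ∀ (a b : ℝ), a ≤ b →
      ∀ f : ℝ → ℝ, ContDiffOn ℝ (⊤ : ℕ∞) f (Set.Icc a b) →
      ((∀ x ∈ Set.Icc a b, 0 ≤ iteratedDerivWithin N f (Set.Icc a b) x) ∨
        (∀ x ∈ Set.Icc a b, iteratedDerivWithin N f (Set.Icc a b) x ≤ 0)) →
      ∀ A : ℝ, 1 ≤ A →
      (∀ lam : ℝ, lam ≠ 0 →
        ‖∫ x in Set.Icc a b, Complex.exp (Complex.I * (lam : ℂ) * (f x : ℂ))‖ ≤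
          A * |lam| ^ (-δ)) →
      ∀ P : Polynomial ℝ, P.natDegree = d → P.derivative.Monic →
      ∀ lam : ℝ, lam ≠ 0 →
        ‖∫ x in Set.Icc a b, Complex.exp (Complex.I * (lam : ℂ) * ((P.eval (f x) : ℝ) : ℂ))‖ ≤
          C * A ^ (1 / (1 - δ)) * |lam| ^ (-(δ / (d : ℝ))) := by
  obtain ⟨C, hC, hbound⟩ := stmt_1_general N d hN hd δ hδ1
  refine ⟨C, hC, fun a b _ f hf hsign A hA hdecay P hPd hP lam hlam => ?_⟩
  refine (hbound a b f (hf.of_le (mod_cast le_top)) hsign A (by linarith) hdecay P hPd hP lam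
    hlam).trans ?_
  gcongr
  exact Real.self_le_rpow_of_one_le hA (by rw [le_div_iff₀] <;> linarith)
end

section
/- Let N ≥ 1 and let f be a smooth real-valued function on a compact interval I = [a, b] satisfying |f^{(N)}(x)| ≥ 1 for all x ∈ I, where in the case N = 1 we additionally assume that f′ is monotone on I. Then there is a constant C, depending only on d and N (and not on f or I), such that for every polynomial P of degree d ≥ 2 whose derivative P′ is either monic or a semi-non-degenerating (SND) polynomial, and for all real λ with |λ| ≥ 1, |∫_I e^{iλ P(f(x))} dx| ≤ C · |λ|^{-1/(N d)}. -/
open MeasureTheory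

/-- A real polynomial `Q = a_m x^m + … + a_0` (with `m = Q.natDegree`) is
semi-non-degenerating (SND) if `max_j |a_{m-j}| = 1` and this maximum is attained by
some `j` with `j ≤ m/2`. -/
def IsSND (Q : Polynomial ℝ) : Prop :=
  (∀ i, |Q.coeff i| ≤ 1) ∧ ∃ j, 2 * j ≤ Q.natDegree ∧ |Q.coeff (Q.natDegree - j)| = 1

/-! Put `δ = |λ| ^ (-1 / (N d))` and `Q = P'`. Rolle's theorem bounds the number of sign changes of
`|Q(f)| - ε`, `|f'| - η`, `Q'(f)`, `f'` and `f''` in terms of `N` and `d`, so `[a, b]` splits into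
boundedly many intervals without such sign changes. If `|Q(f)| ≤ ε` or `|f'| ≤ η` on one of these,
its length is less than `δ`: a function whose `n`-th derivative is at least `1` is small only on
short intervals (compare it with its interpolation polynomial at equidistant nodes), and so is a
monic or SND polynomial. For an SND polynomial far from the origin this is read off the reciprocal
polynomial `x ^ m Q(1 / x)` near the origin, one of whose low coefficients is `±1`. On the remaining
intervals integration by parts against `1 / (λ Q(f) f')`, a product of two monotone functions, gives
the bound `6 / (|λ| ε η)`, which is comparable to `δ` for `ε ≈ δ ^ (N (d - 1))` and
`η ≈ δ ^ (N - 1)`. -/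

open Polynomial Set

/-! ### Zeros of functions with a nonvanishing higher derivative -/

/-- `g 0, g 1, …, g N` are successive derivatives within `s`. Carrying the whole sequence, rather
than `iteratedDerivWithin j f s`, allows `s` to shrink without changing the derivatives. -/
def IsDerivSeqOn (g : ℕ → ℝ → ℝ) (N : ℕ) (s : Set ℝ) : Prop :=
  ∀ j < N, ∀ x ∈ s, HasDerivWithinAt (g j) (g (j + 1) x) s x

namespace IsDerivSeqOn

variable {g h : ℕ → ℝ → ℝ} {M N : ℕ} {s t : Set ℝ}

lemma mono (hg : IsDerivSeqOn g N s) (hts : t ⊆ s) : IsDerivSeqOn g N t :=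
  fun j hj x hx => (hg j hj x (hts hx)).mono hts

lemma of_le (hg : IsDerivSeqOn g N s) (hMN : M ≤ N) : IsDerivSeqOn g M s :=
  fun j hj => hg j (hj.trans_le hMN)

lemma shift (k : ℕ) (hg : IsDerivSeqOn g (N + k) s) : IsDerivSeqOn (fun j => g (j + k)) N s :=
  fun j hj x hx => by simpa only [add_right_comm] using hg (j + k) (by omega) x hx

lemma sub (hg : IsDerivSeqOn g N s) (hh : IsDerivSeqOn h N s) :
    IsDerivSeqOn (fun j => g j - h j) N s :=
  fun j hj x hx => (hg j hj x hx).sub (hh j hj x hx)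

lemma continuousOn (hg : IsDerivSeqOn g N s) {j : ℕ} (hj : j < N) : ContinuousOn (g j) s :=
  fun x hx => (hg j hj x hx).continuousWithinAt

end IsDerivSeqOn

lemma isDerivSeqOn_eval (p : ℝ[X]) (N : ℕ) (s : Set ℝ) :
    IsDerivSeqOn (fun j x => (derivative^[j] p).eval x) N s := fun j _ x _ => by
  simpa only [Function.iterate_succ_apply'] using ((derivative^[j] p).hasDerivAt x).hasDerivWithinAt

lemma isDerivSeqOn_iteratedDerivWithin {f : ℝ → ℝ} {s : Set ℝ} {N : ℕ}
    (hf : ContDiffOn ℝ N f s) (hs : UniqueDiffOn ℝ s) :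
    IsDerivSeqOn (fun j => iteratedDerivWithin j f s) N s := fun j hj x hx => by
  simpa only [iteratedDerivWithin_succ] using
    (hf.differentiableOn_iteratedDerivWithin (mod_cast hj) hs x hx).hasDerivWithinAt

section Rolle

variable {s : Set ℝ}

lemma exists_hasDerivWithinAt_eq_zero [s.OrdConnected] {g g' : ℝ → ℝ} {x y : ℝ}
    (hg : ∀ x ∈ s, HasDerivWithinAt g (g' x) s x) (hx : x ∈ s) (hy : y ∈ s) (hxy : x < y)
    (h : g x = g y) : ∃ z ∈ Ioo x y, g' z = 0 := by
  have hsub : Icc x y ⊆ s := OrdConnected.out ‹_› hx hy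
  refine exists_hasDerivAt_eq_zero hxy
    (fun z hz => ((hg z (hsub hz)).continuousWithinAt).mono hsub) h fun z hz => ?_
  exact ((hg z (hsub (Ioo_subset_Icc_self hz))).mono hsub).hasDerivAt (Icc_mem_nhds hz.1 hz.2)

lemma encard_zeros_le_encard_zeros_deriv_add_one [s.OrdConnected] {g g' : ℝ → ℝ}
    (hg : ∀ x ∈ s, HasDerivWithinAt g (g' x) s x) :
    {x ∈ s | g x = 0}.encard ≤ {x ∈ s | g' x = 0}.encard + 1 := by
  rcases {x ∈ s | g' x = 0}.finite_or_infinite with hfin | hinf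
  · by_contra! hlt
    obtain ⟨Z, hZ, hZcard⟩ := exists_subset_encard_eq (Order.add_one_le_of_lt hlt)
    lift Z to Finset ℝ using
      finite_of_encard_eq_coe (k := hfin.toFinset.card + 2) (by
        rw [hZcard, hfin.encard_eq_coe_toFinset_card]; norm_cast)
    have hle : Z.card ≤ hfin.toFinset.card + 1 := by
      refine Finset.card_le_of_interleaved fun x hx y hy hxy _ => ?_
      obtain ⟨z, hz, hz0⟩ := exists_hasDerivWithinAt_eq_zero hg (hZ hx).1 (hZ hy).1 hxy
        ((hZ hx).2.trans (hZ hy).2.symm)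
      exact ⟨z, hfin.mem_toFinset.2 ⟨OrdConnected.out ‹_› (hZ hx).1 (hZ hy).1
        (Ioo_subset_Icc_self hz), hz0⟩, hz⟩
    rw [encard_coe_eq_coe_finsetCard, hfin.encard_eq_coe_toFinset_card] at hZcard
    have : Z.card = hfin.toFinset.card + 1 + 1 := by exact_mod_cast hZcard
    omega
  · simp [hinf.encard_eq]

lemma IsDerivSeqOn.encard_zeros_le [s.OrdConnected] {g : ℕ → ℝ → ℝ} {N : ℕ}
    (hg : IsDerivSeqOn g N s) :
    {x ∈ s | g 0 x = 0}.encard ≤ {x ∈ s | g N x = 0}.encard + N := by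
  induction N with
  | zero => simp
  | succ N ih =>
    calc {x ∈ s | g 0 x = 0}.encard ≤ {x ∈ s | g N x = 0}.encard + N := ih (hg.of_le N.le_succ)
      _ ≤ {x ∈ s | g (N + 1) x = 0}.encard + 1 + N := by
        gcongr; exact encard_zeros_le_encard_zeros_deriv_add_one (hg N N.lt_succ_self)
      _ = {x ∈ s | g (N + 1) x = 0}.encard + (N + 1 : ℕ) := by push_cast; ring

lemma IsDerivSeqOn.encard_zeros_le_of_ne_zero [s.OrdConnected] {g : ℕ → ℝ → ℝ} {N : ℕ}
    (hg : IsDerivSeqOn g N s) (hN : ∀ x ∈ s, g N x ≠ 0) : {x ∈ s | g 0 x = 0}.encard ≤ N := by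
  have hempty : {x ∈ s | g N x = 0} = ∅ := sep_eq_empty_iff_mem_false.2 hN
  simpa [hempty] using hg.encard_zeros_le

end Rolle

lemma IsDerivSeqOn.encard_eval_eq_zero_le {s : Set ℝ} [s.OrdConnected] {g : ℕ → ℝ → ℝ} {N : ℕ}
    (hN : 0 < N) (hg : IsDerivSeqOn g N s) (hgN : ∀ x ∈ s, g N x ≠ 0) {p : ℝ[X]} (hp : p ≠ 0) :
    {x ∈ s | p.eval (g 0 x) = 0}.encard ≤ (p.natDegree * N : ℕ) := by
  have hlevel (c : ℝ) : {x ∈ s | g 0 x = c}.encard ≤ N := by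
    simpa [sub_eq_zero] using (hg.sub (isDerivSeqOn_eval (C c) N s)).encard_zeros_le_of_ne_zero
      (fun x hx => by simpa [iterate_derivative_C hN] using hgN x hx)
  have hunion : {x ∈ s | p.eval (g 0 x) = 0} = ⋃ c ∈ p.roots.toFinset, {x ∈ s | g 0 x = c} := by
    ext x; simp [hp]
  calc {x ∈ s | p.eval (g 0 x) = 0}.encard
      ≤ ∑ c ∈ p.roots.toFinset, {x ∈ s | g 0 x = c}.encard :=
        hunion ▸ Finset.set_encard_biUnion_le _ _
    _ ≤ p.roots.toFinset.card • (N : ℕ∞) := Finset.sum_le_card_nsmul _ _ _ fun c _ => hlevel c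
    _ = (p.roots.toFinset.card * N : ℕ) := by simp
    _ ≤ (p.natDegree * N : ℕ) := by
      gcongr; exact (Multiset.toFinset_card_le _).trans p.card_roots'

/-! ### Sublevel sets -/

section Interpolation

variable {Z : Finset ℝ} {p : ℝ[X]}

open Finset in
lemma abs_coeff_mul_pow_le_of_separated {k : ℕ} {δ e M : ℝ} (hδ : 0 < δ)
    (hZ : (Z : Set ℝ).Pairwise fun x y => δ ≤ |x - y|) (hdeg : p.degree < #Z)
    (hp : ∀ x ∈ Z, |p.eval x| ≤ e)
    (hM : ∀ x ∈ Z, |(∏ y ∈ Z.erase x, (X - C y)).coeff k| ≤ M) :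
    |p.coeff k| * δ ^ (#Z - 1) ≤ #Z * M * e := by
  have hprod (x) (hx : x ∈ Z) : δ ^ (#Z - 1) ≤ |∏ y ∈ Z.erase x, (x - y)| := by
    rw [abs_prod, ← card_erase_of_mem hx, ← prod_const]
    exact prod_le_prod (fun _ _ => hδ.le) fun y hy =>
      hZ hx (mem_of_mem_erase hy) (ne_of_mem_erase hy).symm
  have hsum : p.coeff k = ∑ x ∈ Z, p.eval x / (∏ y ∈ Z.erase x, (x - y)) *
      (∏ y ∈ Z.erase x, (X - C y)).coeff k := by
    conv_lhs => rw [Lagrange.eq_interpolate (v := id) (Set.injOn_id _) hdeg,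
      Lagrange.interpolate_eq_sum]
    simp
  have hterm (x) (hx : x ∈ Z) : |p.eval x / (∏ y ∈ Z.erase x, (x - y)) *
      (∏ y ∈ Z.erase x, (X - C y)).coeff k| ≤ e / δ ^ (#Z - 1) * M := by
    have he : 0 ≤ e := (abs_nonneg _).trans (hp x hx)
    rw [abs_mul, abs_div]
    gcongr
    exacts [hp x hx, hprod x hx, hM x hx]
  calc |p.coeff k| * δ ^ (#Z - 1)
      ≤ #Z • (e / δ ^ (#Z - 1) * M) * δ ^ (#Z - 1) := by
        gcongr
        rw [hsum]
        exact (abs_sum_le_sum_abs _ _).trans (sum_le_card_nsmul _ _ _ hterm)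
    _ = #Z * M * e := by rw [nsmul_eq_mul]; field_simp

lemma abs_coeff_prod_X_sub_C_le {B : ℝ} (hZ : ∀ y ∈ Z, |y| ≤ B) (k : ℕ) :
    |(∏ y ∈ Z, (X - C y)).coeff k| ≤ max B 1 ^ Z.card * Z.card.choose (Z.card / 2) := by
  simpa using coeff_bdd_of_roots_le (B := B) (RingHom.id ℝ)
    (monic_prod_X_sub_C (fun y : ℝ => y) Z)
    (by simp [Splits.prod, Splits.X_sub_C])
    (natDegree_finsetProd_X_sub_C_eq_card Z _).le
    (by rw [Polynomial.map_id, roots_prod_X_sub_C]; exact hZ) k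

lemma coeff_prod_X_sub_C_card : (∏ y ∈ Z, (X - C y)).coeff Z.card = 1 := by
  have := monic_prod_X_sub_C (fun y : ℝ => y) Z
  rwa [Monic, leadingCoeff, natDegree_finsetProd_X_sub_C_eq_card] at this

lemma exists_separated_nodes {u v : ℝ} (huv : u < v) (n : ℕ) :
    ∃ Z : Finset ℝ, Z.card = n + 1 ∧ ↑Z ⊆ Icc u v ∧
      (Z : Set ℝ).Pairwise fun x y => (v - u) / (n + 1) ≤ |x - y| := by
  have hL : 0 < (v - u) / (n + 1) := div_pos (sub_pos.2 huv) (by positivity)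
  let x (i : ℕ) : ℝ := u + i * ((v - u) / (n + 1))
  have hsep (i j : ℕ) (hij : i ≠ j) : (v - u) / (n + 1) ≤ |x i - x j| := by
    have hij' : (1 : ℝ) ≤ |(i : ℝ) - j| := by
      exact_mod_cast Int.one_le_abs (sub_ne_zero.2 (Nat.cast_injective.ne hij : (i : ℤ) ≠ j))
    calc (v - u) / (n + 1) ≤ |(i : ℝ) - j| * ((v - u) / (n + 1)) :=
        le_mul_of_one_le_left hL.le hij'
      _ = |x i - x j| := by rw [add_sub_add_left_eq_sub, ← sub_mul, abs_mul, abs_of_pos hL]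
  have hinj : Function.Injective x := fun i j hij => by
    by_contra hne
    simpa [hij, hL.not_ge] using hsep i j hne
  refine ⟨(Finset.range (n + 1)).image x, ?_, ?_, ?_⟩
  · rw [Finset.card_image_of_injective _ hinj, Finset.card_range]
  · rw [Finset.coe_image, image_subset_iff]
    intro i hi
    have hi' : (i : ℝ) ≤ n + 1 := by exact_mod_cast (Finset.mem_range.1 hi).le
    refine ⟨le_add_of_nonneg_right (by positivity), ?_⟩
    calc u + i * ((v - u) / (n + 1)) ≤ u + (n + 1) * ((v - u) / (n + 1)) := by gcongr
      _ = v := by field_simp; ring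
  · simpa [Set.Pairwise] using fun i _ j _ hij => hsep i j (ne_of_apply_ne x hij)

lemma IsDerivSeqOn.exists_eq_eval_iterate_derivative {s : Set ℝ} [s.OrdConnected]
    {g : ℕ → ℝ → ℝ} {n : ℕ} (hg : IsDerivSeqOn g n s) (hZ : ↑Z ⊆ s) (hcard : n < Z.card)
    (hp : ∀ x ∈ Z, p.eval x = g 0 x) : ∃ x ∈ s, g n x = (derivative^[n] p).eval x := by
  by_contra! hne
  have hzeros := (hg.sub (isDerivSeqOn_eval p n s)).encard_zeros_le_of_ne_zero
    fun x hx => sub_ne_zero.2 (hne x hx)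
  have hsub : ↑Z ⊆ {x ∈ s | g 0 x - p.eval x = 0} := fun x hx =>
    ⟨hZ hx, sub_eq_zero.2 (hp x hx).symm⟩
  have hle := (encard_le_encard hsub).trans hzeros
  rw [encard_coe_eq_coe_finsetCard] at hle
  exact hcard.not_ge (mod_cast hle)

end Interpolation

lemma eval_iterate_derivative_of_natDegree_le {p : ℝ[X]} {n : ℕ} (hp : p.natDegree ≤ n) (x : ℝ) :
    (derivative^[n] p).eval x = n.factorial * p.coeff n := by
  have hconst : (derivative^[n] p).natDegree ≤ 0 :=
    (natDegree_iterate_derivative p n).trans (by omega)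
  rw [eq_C_of_natDegree_le_zero hconst, eval_C, coeff_iterate_derivative]
  simp [Nat.descFactorial_self]

/-- The constant of the sublevel estimate for functions whose `n`-th derivative is bounded below. -/
noncomputable def sublevelConst (n : ℕ) : ℝ := (n + 1).factorial * (n + 1) ^ n

lemma one_le_sublevelConst (n : ℕ) : 1 ≤ sublevelConst n :=
  one_le_mul_of_one_le_of_one_le (mod_cast Nat.factorial_pos _) (one_le_pow₀ (by simp))

lemma sublevelConst_pos (n : ℕ) : 0 < sublevelConst n :=
  zero_lt_one.trans_le (one_le_sublevelConst n)

lemma sublevelConst_mono : Monotone sublevelConst := fun m n hmn => by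
  calc sublevelConst m ≤ (n + 1).factorial * (n + 1) ^ m := by
        unfold sublevelConst
        gcongr ?_ * (?_ + 1) ^ m
        · exact mod_cast Nat.factorial_le (by omega)
        · exact mod_cast hmn
    _ ≤ sublevelConst n := by
        unfold sublevelConst
        gcongr
        exact le_add_of_nonneg_left n.cast_nonneg

lemma IsDerivSeqOn.mul_pow_sub_le {g : ℕ → ℝ → ℝ} {n : ℕ} {u v c l : ℝ} (huv : u < v)
    (hg : IsDerivSeqOn g n (Icc u v)) (hgn : ∀ x ∈ Icc u v, c ≤ |g n x|)
    (hl : ∀ x ∈ Icc u v, |g 0 x| ≤ l) : c * (v - u) ^ n ≤ sublevelConst n * l := by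
  obtain ⟨Z, hcard, hZ, hsep⟩ := exists_separated_nodes huv n
  have hδ : 0 < (v - u) / (n + 1) := div_pos (sub_pos.2 huv) (by positivity)
  set p := Lagrange.interpolate Z id (g 0)
  have hdeg : p.degree < Z.card := Lagrange.degree_interpolate_lt _ (injOn_id _)
  have hpZ (x) (hx : x ∈ Z) : p.eval x = g 0 x :=
    Lagrange.eval_interpolate_at_node (g 0) (injOn_id _) hx
  have hcoeff : |p.coeff n| * ((v - u) / (n + 1)) ^ n ≤ (n + 1) * l := by
    simpa [hcard] using abs_coeff_mul_pow_le_of_separated (k := n) (M := 1) hδ hsep hdeg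
      (fun x hx => (hpZ x hx).symm ▸ hl x (hZ hx)) fun x hx => by
        have : (Z.erase x).card = n := by rw [Finset.card_erase_of_mem hx, hcard]; rfl
        rw [← this, coeff_prod_X_sub_C_card, abs_one]
  obtain ⟨x, hx, hgx⟩ := hg.exists_eq_eval_iterate_derivative hZ (by omega) hpZ
  have hpn : p.natDegree ≤ n :=
    natDegree_le_iff_coeff_eq_zero.2 fun k hk =>
      (degree_lt_iff_coeff_zero _ _).1 hdeg k (by omega)
  calc c * (v - u) ^ n ≤ n.factorial * |p.coeff n| * (v - u) ^ n := by
        have := hgn x hx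
        rw [hgx, eval_iterate_derivative_of_natDegree_le hpn, abs_mul, Nat.abs_cast] at this
        gcongr
    _ = n.factorial * (n + 1) ^ n * (|p.coeff n| * ((v - u) / (n + 1)) ^ n) := by
        rw [div_pow]; field_simp
    _ ≤ n.factorial * (n + 1) ^ n * ((n + 1) * l) := by gcongr
    _ = sublevelConst n * l := by
        rw [sublevelConst, Nat.factorial_succ]; push_cast; ring

section PolynomialSublevel

variable {p Q : ℝ[X]} {m n : ℕ}

lemma abs_coeff_iterate_derivative_le {A : ℝ} (hp : p.natDegree ≤ m) (hA : ∀ i, |p.coeff i| ≤ A)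
    (n i : ℕ) : |(derivative^[n] p).coeff i| ≤ m.factorial * A := by
  have hA0 : 0 ≤ A := (abs_nonneg _).trans (hA 0)
  rw [coeff_iterate_derivative, nsmul_eq_mul, abs_mul, Nat.abs_cast]
  rcases le_or_gt (i + n) m with hi | hi
  · have hfact : (i + n).descFactorial n ≤ m.factorial :=
      (Nat.le_of_dvd (Nat.factorial_pos _) ⟨i.factorial, by
        rw [mul_comm, ← Nat.factorial_mul_descFactorial (Nat.le_add_left n i),
          Nat.add_sub_cancel]⟩).trans (Nat.factorial_le hi)
    gcongr
    exact hA _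
  · rw [coeff_eq_zero_of_natDegree_lt (hp.trans_lt hi), abs_zero, mul_zero]
    positivity

lemma abs_eval_sub_coeff_zero_le {A z : ℝ} (hp : p.natDegree ≤ m) (hA : ∀ i, |p.coeff i| ≤ A)
    (hz : |z| ≤ 1) : |p.eval z - p.coeff 0| ≤ m * A * |z| := by
  have hA0 : 0 ≤ A := (abs_nonneg _).trans (hA 0)
  have hsum : p.eval z - p.coeff 0 = ∑ i ∈ Finset.range m, p.coeff (i + 1) * z ^ (i + 1) := by
    rw [eval_eq_sum_range' (Nat.lt_succ_of_le hp), Finset.sum_range_succ']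
    simp
  have hterm (i) (_ : i ∈ Finset.range m) : |p.coeff (i + 1) * z ^ (i + 1)| ≤ A * |z| := by
    rw [abs_mul, abs_pow]
    gcongr
    exacts [hA _, pow_le_of_le_one (abs_nonneg z) hz i.succ_ne_zero]
  rw [hsum]
  simpa [mul_assoc] using
    (Finset.abs_sum_le_sum_abs _ _).trans (Finset.sum_le_card_nsmul _ _ _ hterm)

lemma half_le_abs_eval_iterate_derivative {z : ℝ} (hp : p.natDegree ≤ m)
    (hcoeff : ∀ i, |p.coeff i| ≤ 1) (hn : |p.coeff n| = 1)
    (hz : 2 * (m + 1) * m.factorial * |z| ≤ 1) : 1 / 2 ≤ |(derivative^[n] p).eval z| := by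
  have hm : (1 : ℝ) ≤ m.factorial := mod_cast m.factorial_pos
  have hz1 : |z| ≤ 1 := by
    have hone : (1 : ℝ) ≤ 2 * (m + 1) * m.factorial :=
      one_le_mul_of_one_le_of_one_le (by linarith [m.cast_nonneg (α := ℝ)]) hm
    exact (le_mul_of_one_le_left (abs_nonneg z) hone).trans hz
  have hzero : 1 ≤ |(derivative^[n] p).coeff 0| := by
    rw [coeff_iterate_derivative, nsmul_eq_mul, abs_mul, zero_add, hn, mul_one, Nat.abs_cast,
      Nat.descFactorial_self]
    exact mod_cast n.factorial_pos
  have hdiff := abs_eval_sub_coeff_zero_le ((natDegree_iterate_derivative p n).trans (by omega))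
    (abs_coeff_iterate_derivative_le hp hcoeff n) hz1 (m := m)
  have htri := abs_sub_abs_le_abs_sub ((derivative^[n] p).coeff 0) ((derivative^[n] p).eval z)
  rw [abs_sub_comm] at htri
  nlinarith [abs_nonneg z]

/-- The constant bounding the coefficients of a polynomial of degree at most `m` by its sup norm on
a subinterval of `[-B, B]`. -/
noncomputable def coeffBoundConst (m : ℕ) (B : ℝ) : ℝ :=
  (m + 1) ^ (m + 1) * (max B 1 ^ m * m.choose (m / 2))

lemma abs_coeff_mul_pow_sub_le {s t B e : ℝ} (hst : s < t) (hp : p.natDegree ≤ m)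
    (hB : ∀ x ∈ Icc s t, |x| ≤ B) (he : ∀ x ∈ Icc s t, |p.eval x| ≤ e) (k : ℕ) :
    |p.coeff k| * (t - s) ^ m ≤ coeffBoundConst m B * e := by
  obtain ⟨Z, hcard, hZ, hsep⟩ := exists_separated_nodes hst m
  have hbound : |p.coeff k| * ((t - s) / (m + 1)) ^ m ≤
      (m + 1) * (max B 1 ^ m * m.choose (m / 2)) * e := by
    have hdeg : p.degree < Z.card := by
      rw [hcard]
      exact degree_le_natDegree.trans_lt (mod_cast Nat.lt_succ_of_le hp)
    simpa [hcard] using abs_coeff_mul_pow_le_of_separated (k := k)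
      (div_pos (sub_pos.2 hst) (by positivity)) hsep hdeg (fun x hx => he x (hZ hx))
      fun x hx => by
        simpa [Finset.card_erase_of_mem hx, hcard] using abs_coeff_prod_X_sub_C_le (Z := Z.erase x)
          (fun y hy => hB y (hZ (Finset.mem_of_mem_erase hy))) k
  calc |p.coeff k| * (t - s) ^ m
      = (m + 1) ^ m * (|p.coeff k| * ((t - s) / (m + 1)) ^ m) := by rw [div_pow]; field_simp
    _ ≤ (m + 1) ^ m * ((m + 1) * (max B 1 ^ m * m.choose (m / 2)) * e) := by gcongr
    _ = coeffBoundConst m B * e := by rw [coeffBoundConst]; ring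

lemma eval_reflect_mul_pow_inv (hp : p.natDegree ≤ m) {x : ℝ} (hx : x ≠ 0) :
    (reflect m p).eval x = p.eval x⁻¹ * x ^ m := by
  have := invertibleOfNonzero (inv_ne_zero hx)
  have h := eval₂_reflect_mul_pow (RingHom.id ℝ) x⁻¹ m p hp
  rw [invOf_eq_inv, inv_inv] at h
  rw [eval, eval, ← h, mul_assoc, ← mul_pow, inv_mul_cancel₀ hx, one_pow, mul_one]

lemma pow_inv_sub_inv_le_of_far {s t e : ℝ} (hQ : Q.natDegree ≤ m)
    (hcoeff : ∀ i, |Q.coeff i| ≤ 1) (hnm : n ≤ m) (hn : |Q.coeff (m - n)| = 1)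
    (hs : 2 * (m + 1) * m.factorial ≤ s) (hst : s < t) (he : ∀ x ∈ Icc s t, |Q.eval x| ≤ e) :
    1 / 2 * (s⁻¹ - t⁻¹) ^ n ≤ sublevelConst n * (e * s⁻¹ ^ m) := by
  have hs0 : 0 < s := lt_of_lt_of_le (by positivity) hs
  have hR : (reflect m Q).natDegree ≤ m := natDegree_reflect_le.trans (max_le le_rfl hQ)
  have hRn : |(reflect m Q).coeff n| = 1 := by rwa [coeff_reflect, revAt_le hnm]
  have hpos {x : ℝ} (hx : x ∈ Icc t⁻¹ s⁻¹) : 0 < x := (inv_pos.2 (hs0.trans hst)).trans_le hx.1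
  refine (isDerivSeqOn_eval (reflect m Q) n _).mul_pow_sub_le (inv_strictAnti₀ hs0 hst)
    (fun x hx => half_le_abs_eval_iterate_derivative hR
      (fun i => by rw [coeff_reflect]; exact hcoeff _) hRn ?_) fun x hx => ?_
  · calc 2 * (m + 1) * m.factorial * |x| ≤ s * s⁻¹ := by
          rw [abs_of_pos (hpos hx)]; exact mul_le_mul hs hx.2 (hpos hx).le hs0.le
      _ = 1 := mul_inv_cancel₀ hs0.ne'
  · have hx0 := hpos hx
    have he0 : 0 ≤ e := (abs_nonneg _).trans (he s ⟨le_rfl, hst.le⟩)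
    have hinv : x⁻¹ ∈ Icc s t :=
      ⟨le_inv_of_le_inv₀ hx0 hx.2, inv_le_of_inv_le₀ (hs0.trans hst) hx.1⟩
    rw [Function.iterate_zero_apply, eval_reflect_mul_pow_inv hQ hx0.ne', abs_mul, abs_pow,
      abs_of_pos hx0]
    gcongr
    exacts [he _ hinv, hx.2]

lemma pow_sub_mul_pow_le_of_far {s t e : ℝ} (hQ : Q.natDegree ≤ m)
    (hcoeff : ∀ i, |Q.coeff i| ≤ 1) (hnm : 2 * n ≤ m) (hn : |Q.coeff (m - n)| = 1)
    (hs : 2 * (m + 1) * m.factorial ≤ s) (hst : s < t) (hts : t ≤ 2 * s)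
    (he : ∀ x ∈ Icc s t, |Q.eval x| ≤ e) :
    (t - s) ^ n * s ^ (m - 2 * n) ≤ 2 ^ (n + 1) * sublevelConst n * e := by
  have hs0 : 0 < s := lt_of_lt_of_le (by positivity) hs
  have ht0 : 0 < t := hs0.trans hst
  have hlen : (t - s) / (2 * s ^ 2) ≤ s⁻¹ - t⁻¹ := by
    rw [inv_sub_inv hs0.ne' ht0.ne']
    exact div_le_div_of_nonneg_left (sub_nonneg.2 hst.le) (by positivity) (by nlinarith)
  calc (t - s) ^ n * s ^ (m - 2 * n)
      = 2 ^ (n + 1) * (1 / 2 * ((t - s) / (2 * s ^ 2)) ^ n) * s ^ m := by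
        rw [div_pow, mul_pow, ← pow_mul, ← pow_sub_mul_pow s hnm]
        field_simp
        ring
    _ ≤ 2 ^ (n + 1) * (1 / 2 * (s⁻¹ - t⁻¹) ^ n) * s ^ m := by
        have := div_nonneg (sub_nonneg.2 hst.le) (by positivity : 0 ≤ 2 * s ^ 2)
        gcongr
    _ ≤ 2 ^ (n + 1) * (sublevelConst n * (e * s⁻¹ ^ m)) * s ^ m := by
        have := pow_inv_sub_inv_le_of_far hQ hcoeff (by omega) hn hs hst he
        gcongr ?_ * s ^ m
        exact mul_le_mul_of_nonneg_left this (by positivity)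
    _ = 2 ^ (n + 1) * sublevelConst n * e := by rw [inv_pow]; field_simp

lemma pow_le_sq_mul_of_pow_le {l K e : ℝ} {k m : ℕ} (hl : 0 ≤ l) (hK : 1 ≤ K) (he : e ≤ 1)
    (hkm : k ≤ m) (hmk : m ≤ 2 * k) (h : l ^ k ≤ K * e) : l ^ m ≤ K ^ 2 * e := by
  have hKe : 0 ≤ K * e := (pow_nonneg hl k).trans h
  have he0 : 0 ≤ e := nonneg_of_mul_nonneg_right hKe (by linarith)
  rcases le_total l 1 with hl1 | hl1
  · calc l ^ m ≤ l ^ k := pow_le_pow_of_le_one hl hl1 hkm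
      _ ≤ K * e := h
      _ ≤ K * (K * e) := le_mul_of_one_le_left hKe hK
      _ = K ^ 2 * e := by ring
  · calc l ^ m ≤ l ^ (2 * k) := pow_le_pow_right₀ hl1 hmk
      _ = (l ^ k) ^ 2 := by ring
      _ ≤ (K * e) ^ 2 := by gcongr
      _ = K ^ 2 * e * e := by ring
      _ ≤ K ^ 2 * e := mul_le_of_le_one_right (by positivity) he

lemma pow_sub_le_of_far {s t e : ℝ} (hQ : Q.natDegree ≤ m) (hcoeff : ∀ i, |Q.coeff i| ≤ 1)
    (hnm : 2 * n ≤ m) (hn : |Q.coeff (m - n)| = 1) (hs : 2 * (m + 1) * m.factorial ≤ s)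
    (hst : s < t) (hts : t ≤ 2 * s) (he1 : e ≤ 1) (he : ∀ x ∈ Icc s t, |Q.eval x| ≤ e) :
    (t - s) ^ m ≤ (2 ^ (m + 1) * sublevelConst m) ^ 2 * e := by
  have he0 : 0 ≤ e := (abs_nonneg _).trans (he s ⟨le_rfl, hst.le⟩)
  have hts0 : 0 ≤ t - s := sub_nonneg.2 hst.le
  have hlow : (t - s) ^ (m - n) ≤ 2 ^ (m + 1) * sublevelConst m * e :=
    calc (t - s) ^ (m - n) = (t - s) ^ n * (t - s) ^ (m - 2 * n) := by
          rw [← pow_add]; congr 1; omega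
      _ ≤ (t - s) ^ n * s ^ (m - 2 * n) := by gcongr; linarith
      _ ≤ 2 ^ (n + 1) * sublevelConst n * e :=
          pow_sub_mul_pow_le_of_far hQ hcoeff hnm hn hs hst hts he
      _ ≤ 2 ^ (m + 1) * sublevelConst m * e := by
          gcongr ?_ * e
          exact mul_le_mul (pow_le_pow_right₀ one_le_two (by omega))
            (sublevelConst_mono (by omega)) (sublevelConst_pos n).le (by positivity)
  exact pow_le_sq_mul_of_pow_le hts0
    (one_le_mul_of_one_le_of_one_le (one_le_pow₀ one_le_two) (one_le_sublevelConst m)) he1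
    (by omega) (by omega) hlow

/-- An interval on which `|Q| ≤ e ≤ 1` has length at most `(S e) ^ (1 / deg Q)`. -/
def HasSublevelBound (Q : ℝ[X]) (S : ℝ) : Prop :=
  ∀ ⦃s t e : ℝ⦄, s < t → e ≤ 1 → (∀ x ∈ Icc s t, |Q.eval x| ≤ e) →
    (t - s) ^ Q.natDegree ≤ S * e

lemma HasSublevelBound.mono {S S' : ℝ} (h : HasSublevelBound Q S) (hS : S ≤ S') :
    HasSublevelBound Q S' := fun s t e hst he hQ => by
  have he0 : 0 ≤ e := (abs_nonneg _).trans (hQ s ⟨le_rfl, hst.le⟩)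
  exact (h hst he hQ).trans (by gcongr)

lemma hasSublevelBound_of_monic (hQ : Q.Monic) :
    HasSublevelBound Q (sublevelConst Q.natDegree) := fun s t e hst _ he => by
  have hderiv (x : ℝ) : 1 ≤ |(derivative^[Q.natDegree] Q).eval x| := by
    rw [eval_iterate_derivative_of_natDegree_le le_rfl, hQ.coeff_natDegree, mul_one, Nat.abs_cast]
    exact mod_cast Nat.factorial_pos _
  simpa using (isDerivSeqOn_eval Q Q.natDegree _).mul_pow_sub_le hst (fun x _ => hderiv x) he

/-- The constant of the sublevel estimate for SND polynomials of degree `m`: the two summands come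
from intervals far from and close to the origin. -/
noncomputable def sndSublevelConst (m : ℕ) : ℝ :=
  4 ^ m * ((2 ^ (m + 1) * sublevelConst m) ^ 2 +
    coeffBoundConst m (2 * (2 * (m + 1) * m.factorial)))

lemma pow_sub_le_of_nonneg_midpoint {s t e : ℝ} (hcoeff : ∀ i, |Q.coeff i| ≤ 1)
    (hn : 2 * n ≤ Q.natDegree) (hQn : |Q.coeff (Q.natDegree - n)| = 1) (hst : s < t)
    (hmid : 0 ≤ s + t) (he1 : e ≤ 1) (he : ∀ x ∈ Icc s t, |Q.eval x| ≤ e) :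
    (t - s) ^ Q.natDegree ≤ sndSublevelConst Q.natDegree * e := by
  set m := Q.natDegree with hm
  set ρ : ℝ := 2 * (m + 1) * m.factorial
  -- The right quarter `[r, t]` satisfies `t ≤ 2 * r`, so it is either far from `0` or bounded.
  set r := (s + 3 * t) / 4 with hr
  have he0 : 0 ≤ e := (abs_nonneg _).trans (he s ⟨le_rfl, hst.le⟩)
  have hM : 0 ≤ coeffBoundConst m (2 * ρ) := by unfold coeffBoundConst; positivity
  have hrt : r < t := by linarith
  have hsub : ∀ x ∈ Icc r t, |Q.eval x| ≤ e := fun x hx => he x ⟨by linarith [hx.1], hx.2⟩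
  have hquarter : (t - r) ^ m ≤
      ((2 ^ (m + 1) * sublevelConst m) ^ 2 + coeffBoundConst m (2 * ρ)) * e := by
    rw [add_mul]
    rcases le_or_gt ρ r with hfar | hnear
    · exact le_add_of_le_of_nonneg
        (pow_sub_le_of_far hm.ge hcoeff hn hQn hfar hrt (by linarith) he1 hsub) (by positivity)
    · have hbdd : ∀ x ∈ Icc r t, |x| ≤ 2 * ρ := fun x hx => by
        rw [abs_le]; constructor <;> linarith [hx.1, hx.2]
      have := abs_coeff_mul_pow_sub_le hrt hm.ge hbdd hsub (m - n)
      rw [hQn, one_mul] at this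
      exact le_add_of_nonneg_of_le (by positivity) this
  calc (t - s) ^ m = 4 ^ m * (t - r) ^ m := by rw [← mul_pow, hr]; ring
    _ ≤ 4 ^ m * (((2 ^ (m + 1) * sublevelConst m) ^ 2 + coeffBoundConst m (2 * ρ)) * e) := by
        gcongr
    _ = sndSublevelConst m * e := by rw [← mul_assoc]; rfl

lemma IsSND.hasSublevelBound (hQ : IsSND Q) :
    HasSublevelBound Q (sndSublevelConst Q.natDegree) := fun s t e hst he1 he => by
  obtain ⟨hcoeff, n, hn, hQn⟩ := hQ
  rcases le_total 0 (s + t) with hmid | hmid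
  · exact pow_sub_le_of_nonneg_midpoint hcoeff hn hQn hst hmid he1 he
  · have habs (i : ℕ) : |(Q.comp (-X)).coeff i| = |Q.coeff i| := by
      rw [← neg_one_mul (X : ℝ[X]), ← C_1, ← C_neg, comp_C_mul_X_coeff, abs_mul,
        abs_pow, abs_neg, abs_one, one_pow, mul_one]
    have hdeg : (Q.comp (-X)).natDegree = Q.natDegree := by simp [natDegree_comp]
    have := pow_sub_le_of_nonneg_midpoint (Q := Q.comp (-X)) (n := n) (s := -t) (t := -s) (e := e)
      (fun i => (habs i).trans_le (hcoeff i)) (hdeg ▸ hn) (by rw [habs, hdeg, hQn])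
      (neg_lt_neg hst) (by linarith) he1
      (fun x hx => by
        simpa using he (-x) ⟨le_neg_of_le_neg hx.2, neg_le_of_neg_le hx.1⟩)
    rwa [hdeg, neg_sub_neg] at this

lemma exists_hasSublevelBound (m : ℕ) : ∃ S, 1 ≤ S ∧ ∀ Q : ℝ[X], Q.natDegree = m →
    Q.Monic ∨ IsSND Q → HasSublevelBound Q S := by
  refine ⟨max (sublevelConst m) (sndSublevelConst m),
    (one_le_sublevelConst m).trans (le_max_left _ _), ?_⟩
  rintro Q rfl (hQ | hQ)
  exacts [(hasSublevelBound_of_monic hQ).mono (le_max_left _ _),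
    hQ.hasSublevelBound.mono (le_max_right _ _)]

end PolynomialSublevel

/-! ### Splitting into intervals without sign changes -/

/-- `h` does not change sign on `s`. -/
def HasConstantSignOn (h : ℝ → ℝ) (s : Set ℝ) : Prop :=
  (∀ x ∈ s, 0 ≤ h x) ∨ ∀ x ∈ s, h x ≤ 0

namespace HasConstantSignOn

variable {h k : ℝ → ℝ} {s t : Set ℝ} {u v : ℝ}

lemma mono (hh : HasConstantSignOn h s) (hts : t ⊆ s) : HasConstantSignOn h t :=
  hh.imp (fun H x hx => H x (hts hx)) fun H x hx => H x (hts hx)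

lemma const (c : ℝ) (s : Set ℝ) : HasConstantSignOn (fun _ => c) s :=
  (le_total 0 c).imp (fun hc _ _ => hc) fun hc _ _ => hc

lemma mul (hh : HasConstantSignOn h s) (hk : HasConstantSignOn k s) :
    HasConstantSignOn (fun x => h x * k x) s := by
  rcases hh with hh | hh <;> rcases hk with hk | hk
  · exact Or.inl fun x hx => mul_nonneg (hh x hx) (hk x hx)
  · exact Or.inr fun x hx => mul_nonpos_of_nonneg_of_nonpos (hh x hx) (hk x hx)
  · exact Or.inr fun x hx => mul_nonpos_of_nonpos_of_nonneg (hh x hx) (hk x hx)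
  · exact Or.inl fun x hx => mul_nonneg_of_nonpos_of_nonpos (hh x hx) (hk x hx)

lemma of_ne_zero (hh : ContinuousOn h (Icc u v)) (h0 : ∀ x ∈ Ioo u v, h x ≠ 0) :
    HasConstantSignOn h (Icc u v) := by
  by_contra hsign
  simp only [HasConstantSignOn, not_or, not_forall, not_le] at hsign
  obtain ⟨⟨x, hx, hneg⟩, y, hy, hpos⟩ := hsign
  rcases lt_trichotomy x y with hxy | rfl | hyx
  · obtain ⟨z, hz, hz0⟩ := intermediate_value_Ioo hxy.le
      (hh.mono (Icc_subset_Icc hx.1 hy.2)) ⟨hneg, hpos⟩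
    exact h0 z ⟨hx.1.trans_lt hz.1, hz.2.trans_le hy.2⟩ hz0
  · exact hneg.not_gt hpos
  · obtain ⟨z, hz, hz0⟩ := intermediate_value_Ioo' hyx.le
      (hh.mono (Icc_subset_Icc hy.1 hx.2)) ⟨hneg, hpos⟩
    exact h0 z ⟨hy.1.trans_lt hz.1, hz.2.trans_le hx.2⟩ hz0

end HasConstantSignOn

/-- The interval property `p` holds on every nondegenerate subinterval of `[a, b]` whose interior
avoids a suitable set of at most `n` cut points. -/
def HoldsPiecewise (a b : ℝ) (n : ℕ) (p : ℝ → ℝ → Prop) : Prop :=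
  ∃ Z : Finset ℝ, Z.card ≤ n ∧
    ∀ ⦃u v⦄, a ≤ u → u < v → v ≤ b → Disjoint (Z : Set ℝ) (Ioo u v) → p u v

namespace HoldsPiecewise

variable {a b : ℝ} {m n : ℕ} {p q : ℝ → ℝ → Prop}

lemma mono (hp : HoldsPiecewise a b n p)
    (hpq : ∀ ⦃u v⦄, a ≤ u → u < v → v ≤ b → p u v → q u v) : HoldsPiecewise a b n q :=
  let ⟨Z, hcard, hZ⟩ := hp
  ⟨Z, hcard, fun _ _ hu huv hv hdisj => hpq hu huv hv (hZ hu huv hv hdisj)⟩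

lemma of_forall (hp : ∀ ⦃u v⦄, a ≤ u → u < v → v ≤ b → p u v) : HoldsPiecewise a b n p :=
  ⟨∅, n.zero_le, fun _ _ hu huv hv _ => hp hu huv hv⟩

lemma and (hp : HoldsPiecewise a b m p) (hq : HoldsPiecewise a b n q) :
    HoldsPiecewise a b (m + n) fun u v => p u v ∧ q u v := by
  obtain ⟨Z, hZcard, hZ⟩ := hp
  obtain ⟨W, hWcard, hW⟩ := hq
  refine ⟨Z ∪ W, (Finset.card_union_le Z W).trans (add_le_add hZcard hWcard),
    fun u v hu huv hv hdisj => ?_⟩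
  rw [Finset.coe_union, disjoint_union_left] at hdisj
  exact ⟨hZ hu huv hv hdisj.1, hW hu huv hv hdisj.2⟩

lemma hasConstantSignOn {h : ℝ → ℝ} (hh : ContinuousOn h (Icc a b))
    (hzeros : {x ∈ Icc a b | h x = 0}.encard ≤ n) :
    HoldsPiecewise a b n fun u v => HasConstantSignOn h (Icc u v) := by
  obtain ⟨hfin, k, hk, hkn⟩ := encard_le_coe_iff.1 hzeros
  refine ⟨hfin.toFinset, ?_, fun u v hu _ hv hdisj =>
    .of_ne_zero (hh.mono (Icc_subset_Icc hu hv)) fun x hx hx0 => ?_⟩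
  · rw [hfin.encard_eq_coe_toFinset_card] at hk
    exact (Nat.cast_injective hk).trans_le hkn
  · rw [hfin.coe_toFinset] at hdisj
    exact hdisj.notMem_of_mem_right hx ⟨⟨hu.trans hx.1.le, hx.2.le.trans hv⟩, hx0⟩

lemma le_mul_of_subadditive {F : ℝ → ℝ → ℝ} {A : ℝ} (hab : a < b) (hA : 0 ≤ A)
    (hF : ∀ ⦃u v w⦄, a ≤ u → u < v → v < w → w ≤ b → F u w ≤ F u v + F v w)
    (h : HoldsPiecewise a b n fun u v => F u v ≤ A) : F a b ≤ (n + 1) * A := by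
  obtain ⟨Z, hcard, hZ⟩ := h
  have hinit : ∀ W : Finset ℝ, ∀ v, a < v → v ≤ b → (Z : Set ℝ) ∩ Ioo a v ⊆ W →
      F a v ≤ (W.card + 1) * A := fun W => by
    induction W using Finset.induction_on_max with
    | empty =>
      intro v hav hv hsub
      have : Disjoint (Z : Set ℝ) (Ioo a v) :=
        disjoint_iff_inter_eq_empty.2 (subset_empty_iff.1 (by simpa using hsub))
      simpa using hZ le_rfl hav hv this
    | insert z W hzW ih =>
      intro v hav hv hsub
      rw [Finset.card_insert_of_notMem fun hz => lt_irrefl z (hzW z hz)]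
      by_cases hz : z ∈ Ioo a v
      · have hleft : F a z ≤ (W.card + 1) * A := by
          refine ih z hz.1 (hz.2.le.trans hv) fun x hx => ?_
          have := hsub ⟨hx.1, hx.2.1, hx.2.2.trans hz.2⟩
          exact (Finset.mem_insert.1 this).resolve_left hx.2.2.ne
        have hright : F z v ≤ A := by
          refine hZ hz.1.le hz.2 hv (disjoint_left.2 fun x hxZ hx => ?_)
          rcases Finset.mem_insert.1 (hsub ⟨hxZ, hz.1.trans hx.1, hx.2⟩) with rfl | hxW
          exacts [lt_irrefl x hx.1, (hzW x hxW).not_gt hx.1]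
        push_cast
        linarith [hF le_rfl hz.1 hz.2 hv]
      · have hle : F a v ≤ (W.card + 1) * A := by
          refine ih v hav hv fun x hx => (Finset.mem_insert.1 (hsub hx)).resolve_left ?_
          rintro rfl
          exact hz hx.2
        push_cast
        linarith
  refine (hinit Z b hab le_rfl inter_subset_left).trans ?_
  gcongr

end HoldsPiecewise

/-! ### Van der Corput's estimate -/

section Oscillatory

variable {u v : ℝ}

lemma norm_integral_cexp_le {φ φ' w w' : ℝ → ℝ} (huv : u ≤ v)
    (hφ : ∀ x ∈ Icc u v, HasDerivWithinAt φ (φ' x) (Icc u v) x)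
    (hw : ∀ x ∈ Icc u v, HasDerivWithinAt w (w' x) (Icc u v) x)
    (hw' : ContinuousOn w' (Icc u v)) (hmul : ∀ x ∈ Icc u v, φ' x * w x = 1) :
    ‖∫ x in u..v, Complex.exp (φ x * Complex.I)‖ ≤ |w u| + |w v| + ∫ x in u..v, |w' x| := by
  set E : ℝ → ℂ := fun x => Complex.exp (φ x * Complex.I)
  have hE (x) : ‖E x‖ = 1 := Complex.norm_exp_ofReal_mul_I _
  have hφc : ContinuousOn φ (Icc u v) := fun x hx => (hφ x hx).continuousWithinAt
  have hwc : ContinuousOn w (Icc u v) := fun x hx => (hw x hx).continuousWithinAt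
  have hEc : ContinuousOn E (Icc u v) := by fun_prop
  have hEint : IntervalIntegrable (fun x => E x * Complex.I) volume u v :=
    (hEc.mul continuousOn_const).intervalIntegrable_of_Icc huv
  have hE'int : IntervalIntegrable (fun x => E x * (w' x : ℂ)) volume u v :=
    ContinuousOn.intervalIntegrable_of_Icc huv (by fun_prop)
  have hftc : ∫ x in u..v, (E x * Complex.I + E x * w' x) = E v * w v - E u * w u := by
    refine intervalIntegral.integral_eq_sub_of_hasDerivAt_of_le huv (f := fun x => E x * (w x : ℂ))
      (by fun_prop) (fun x hx => ?_) (hEint.add hE'int)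
    have hx' := Ioo_subset_Icc_self hx
    have hnhds := Icc_mem_nhds hx.1 hx.2
    have hmul' : (φ' x : ℂ) * w x = 1 := mod_cast hmul x hx'
    refine ((((hφ x hx').hasDerivAt hnhds).ofReal_comp.mul_const Complex.I).cexp.mul
      ((hw x hx').hasDerivAt hnhds).ofReal_comp).congr_deriv ?_
    linear_combination E x * Complex.I * hmul'
  rw [intervalIntegral.integral_add hEint hE'int, intervalIntegral.integral_mul_const] at hftc
  calc ‖∫ x in u..v, E x‖ = ‖(∫ x in u..v, E x) * Complex.I‖ := by simp
    _ = ‖E v * w v - E u * w u - ∫ x in u..v, E x * w' x‖ := by rw [← hftc]; ring_nf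
    _ ≤ ‖E v * w v‖ + ‖E u * w u‖ + ‖∫ x in u..v, E x * w' x‖ :=
        (norm_sub_le _ _).trans (by gcongr; exact norm_sub_le _ _)
    _ ≤ ‖E v * w v‖ + ‖E u * w u‖ + ∫ x in u..v, ‖E x * w' x‖ := by
        gcongr; exact intervalIntegral.norm_integral_le_integral_norm huv
    _ = |w u| + |w v| + ∫ x in u..v, |w' x| := by
        simp only [norm_mul, hE, one_mul, Complex.norm_real, Real.norm_eq_abs]; ring

lemma integral_abs_deriv_le {α α' : ℝ → ℝ} {A : ℝ} (huv : u ≤ v)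
    (hα : ∀ x ∈ Icc u v, HasDerivWithinAt α (α' x) (Icc u v) x)
    (hα' : ContinuousOn α' (Icc u v)) (hsign : HasConstantSignOn α' (Icc u v))
    (hA : ∀ x ∈ Icc u v, |α x| ≤ A) : ∫ x in u..v, |α' x| ≤ 2 * A := by
  have hftc : ∫ x in u..v, α' x = α v - α u :=
    intervalIntegral.integral_eq_sub_of_hasDerivAt_of_le huv
      (fun x hx => (hα x hx).continuousWithinAt)
      (fun x hx => (hα x (Ioo_subset_Icc_self hx)).hasDerivAt (Icc_mem_nhds hx.1 hx.2))
      (hα'.intervalIntegrable_of_Icc huv)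
  have habs : ∫ x in u..v, |α' x| = |α v - α u| := by
    have hnonneg : 0 ≤ ∫ x in u..v, |α' x| :=
      intervalIntegral.integral_nonneg huv fun x _ => abs_nonneg _
    have heq : (∫ x in u..v, |α' x|) = ∫ x in u..v, α' x ∨
        (∫ x in u..v, |α' x|) = -∫ x in u..v, α' x := by
      rw [← intervalIntegral.integral_neg]
      refine hsign.imp (fun H => ?_) fun H => ?_ <;>
        refine intervalIntegral.integral_congr fun x hx => ?_
      exacts [abs_of_nonneg (H x (uIcc_of_le huv ▸ hx)), abs_of_nonpos (H x (uIcc_of_le huv ▸ hx))]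
    rw [← hftc, ← abs_of_nonneg hnonneg, abs_eq_abs]
    exact heq
  rw [habs]
  linarith [abs_sub (α v) (α u), hA u ⟨le_rfl, huv⟩, hA v ⟨huv, le_rfl⟩]

lemma norm_integral_cexp_le_of_hasConstantSignOn_inv {φ φ' α α' β β' : ℝ → ℝ} {A B : ℝ}
    (huv : u ≤ v) (hφ : ∀ x ∈ Icc u v, HasDerivWithinAt φ (φ' x) (Icc u v) x)
    (hα : ∀ x ∈ Icc u v, HasDerivWithinAt α (α' x) (Icc u v) x)
    (hβ : ∀ x ∈ Icc u v, HasDerivWithinAt β (β' x) (Icc u v) x)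
    (hα' : ContinuousOn α' (Icc u v)) (hβ' : ContinuousOn β' (Icc u v))
    (hαsign : HasConstantSignOn α' (Icc u v)) (hβsign : HasConstantSignOn β' (Icc u v))
    (hA : ∀ x ∈ Icc u v, |α x| ≤ A) (hB : ∀ x ∈ Icc u v, |β x| ≤ B)
    (hmul : ∀ x ∈ Icc u v, φ' x * (α x * β x) = 1) :
    ‖∫ x in u..v, Complex.exp (φ x * Complex.I)‖ ≤ 6 * (A * B) := by
  have hA0 : 0 ≤ A := (abs_nonneg _).trans (hA u ⟨le_rfl, huv⟩)
  have hB0 : 0 ≤ B := (abs_nonneg _).trans (hB u ⟨le_rfl, huv⟩)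
  have hαc : ContinuousOn α (Icc u v) := fun x hx => (hα x hx).continuousWithinAt
  have hβc : ContinuousOn β (Icc u v) := fun x hx => (hβ x hx).continuousWithinAt
  have hαβ (x) (hx : x ∈ Icc u v) : |α x * β x| ≤ A * B := by
    rw [abs_mul]; gcongr; exacts [hA x hx, hB x hx]
  have hint {k : ℝ → ℝ} (hk : ContinuousOn k (Icc u v)) : IntervalIntegrable k volume u v :=
    hk.intervalIntegrable_of_Icc huv
  have hvar : ∫ x in u..v, |α' x * β x + α x * β' x| ≤ 4 * (A * B) :=
    calc ∫ x in u..v, |α' x * β x + α x * β' x|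
        ≤ ∫ x in u..v, (|α' x| * B + A * |β' x|) := by
          refine intervalIntegral.integral_mono_on huv (hint (by fun_prop)) (hint (by fun_prop))
            fun x hx => (abs_add_le _ _).trans ?_
          rw [abs_mul, abs_mul]
          gcongr
          exacts [hB x hx, hA x hx]
      _ = (∫ x in u..v, |α' x|) * B + A * ∫ x in u..v, |β' x| := by
          rw [intervalIntegral.integral_add (hint (by fun_prop)) (hint (by fun_prop)),
            intervalIntegral.integral_mul_const, intervalIntegral.integral_const_mul]
      _ ≤ 2 * A * B + A * (2 * B) := by
          gcongr
          exacts [integral_abs_deriv_le huv hα hα' hαsign hA,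
            integral_abs_deriv_le huv hβ hβ' hβsign hB]
      _ = 4 * (A * B) := by ring
  have hparts := norm_integral_cexp_le huv hφ (fun x hx => (hα x hx).mul (hβ x hx))
    (by fun_prop) hmul
  simp only [Pi.mul_apply] at hparts
  linarith [hαβ u ⟨le_rfl, huv⟩, hαβ v ⟨huv, le_rfl⟩]

lemma norm_integral_cexp_le_of_mul {φ q q' r r' : ℝ → ℝ} {e h : ℝ} (huv : u ≤ v)
    (he : 0 < e) (hh : 0 < h)
    (hφ : ∀ x ∈ Icc u v, HasDerivWithinAt φ (q x * r x) (Icc u v) x)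
    (hq : ∀ x ∈ Icc u v, HasDerivWithinAt q (q' x) (Icc u v) x)
    (hr : ∀ x ∈ Icc u v, HasDerivWithinAt r (r' x) (Icc u v) x)
    (hq' : ContinuousOn q' (Icc u v)) (hr' : ContinuousOn r' (Icc u v))
    (hqsign : HasConstantSignOn q' (Icc u v)) (hrsign : HasConstantSignOn r' (Icc u v))
    (hqe : ∀ x ∈ Icc u v, e ≤ |q x|) (hrh : ∀ x ∈ Icc u v, h ≤ |r x|) :
    ‖∫ x in u..v, Complex.exp (φ x * Complex.I)‖ ≤ 6 / (e * h) := by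
  have hq0 (x) (hx : x ∈ Icc u v) : q x ≠ 0 := abs_pos.1 (he.trans_le (hqe x hx))
  have hr0 (x) (hx : x ∈ Icc u v) : r x ≠ 0 := abs_pos.1 (hh.trans_le (hrh x hx))
  have hqc : ContinuousOn q (Icc u v) := fun x hx => (hq x hx).continuousWithinAt
  have hrc : ContinuousOn r (Icc u v) := fun x hx => (hr x hx).continuousWithinAt
  have hinv {k k' : ℝ → ℝ} (hk : HasConstantSignOn k' (Icc u v)) :
      HasConstantSignOn (fun x => -k' x / k x ^ 2) (Icc u v) :=
    hk.symm.imp (fun H x hx => div_nonneg (neg_nonneg.2 (H x hx)) (sq_nonneg _))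
      fun H x hx => div_nonpos_of_nonpos_of_nonneg (neg_nonpos.2 (H x hx)) (sq_nonneg _)
  have := norm_integral_cexp_le_of_hasConstantSignOn_inv huv hφ
    (fun x hx => (hq x hx).inv (hq0 x hx)) (fun x hx => (hr x hx).inv (hr0 x hx))
    (hq'.neg.div (hqc.pow 2) fun x hx => pow_ne_zero 2 (hq0 x hx))
    (hr'.neg.div (hrc.pow 2) fun x hx => pow_ne_zero 2 (hr0 x hx))
    (hinv hqsign) (hinv hrsign) (A := e⁻¹) (B := h⁻¹)
    (fun x hx => by rw [Pi.inv_apply, abs_inv]; exact inv_anti₀ he (hqe x hx))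
    (fun x hx => by rw [Pi.inv_apply, abs_inv]; exact inv_anti₀ hh (hrh x hx))
    (fun x hx => by
      have := hq0 x hx
      have := hr0 x hx
      simp only [Pi.inv_apply]
      field_simp)
  rwa [← mul_inv, ← div_eq_mul_inv] at this

end Oscillatory

section Pieces

variable {g : ℕ → ℝ → ℝ} {n : ℕ} {P Q : ℝ[X]} {u v δ S lam : ℝ}

/-- A function whose `n`-th derivative is at least `1` in absolute value stays below
`sublevelThreshold n δ` only on intervals of length less than `δ`. -/
noncomputable def sublevelThreshold (n : ℕ) (δ : ℝ) : ℝ := δ ^ n / (2 * sublevelConst n)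

lemma sublevelThreshold_pos (n : ℕ) (hδ : 0 < δ) : 0 < sublevelThreshold n δ :=
  div_pos (pow_pos hδ n) (mul_pos two_pos (sublevelConst_pos n))

lemma sublevelThreshold_le_one (n : ℕ) (hδ0 : 0 ≤ δ) (hδ1 : δ ≤ 1) : sublevelThreshold n δ ≤ 1 :=
  div_le_one_of_le₀ ((pow_le_one₀ hδ0 hδ1).trans (by linarith [one_le_sublevelConst n]))
    (mul_pos two_pos (sublevelConst_pos n)).le

lemma IsDerivSeqOn.sub_lt_of_abs_le_sublevelThreshold (huv : u < v) (hδ : 0 < δ)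
    (hg : IsDerivSeqOn g n (Icc u v)) (hgn : ∀ x ∈ Icc u v, 1 ≤ |g n x|)
    (hsmall : ∀ x ∈ Icc u v, |g 0 x| ≤ sublevelThreshold n δ) : v - u < δ := by
  refine lt_of_pow_lt_pow_left₀ n hδ.le ?_
  calc (v - u) ^ n = 1 * (v - u) ^ n := (one_mul _).symm
    _ ≤ sublevelConst n * sublevelThreshold n δ := hg.mul_pow_sub_le huv hgn hsmall
    _ = δ ^ n / 2 := by
      have := (sublevelConst_pos n).ne'
      rw [sublevelThreshold]; field_simp
    _ < δ ^ n := half_lt_self (pow_pos hδ n)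

lemma HasSublevelBound.sub_lt {τ s t : ℝ} (hQ : HasSublevelBound Q S) (hS : 1 ≤ S) (hτ0 : 0 < τ)
    (hτ1 : τ ≤ 1) (hst : s < t)
    (hsmall : ∀ x ∈ Icc s t, |Q.eval x| ≤ τ ^ Q.natDegree / (2 * S)) : t - s < τ := by
  have hpow := pow_pos hτ0 Q.natDegree
  refine lt_of_pow_lt_pow_left₀ Q.natDegree hτ0.le ?_
  calc (t - s) ^ Q.natDegree ≤ S * (τ ^ Q.natDegree / (2 * S)) :=
        hQ hst (div_le_one_of_le₀ ((pow_le_one₀ hτ0.le hτ1).trans (by linarith)) (by linarith))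
          hsmall
    _ = τ ^ Q.natDegree / 2 := by field_simp
    _ < τ ^ Q.natDegree := half_lt_self hpow

lemma HasSublevelBound.abs_sub_le_of_continuousOn {f : ℝ → ℝ} {s : Set ℝ} {τ x y : ℝ}
    (hQ : HasSublevelBound Q S) (hS : 1 ≤ S) (hτ0 : 0 < τ) (hτ1 : τ ≤ 1)
    (hs : IsPreconnected s) (hf : ContinuousOn f s)
    (hsmall : ∀ x ∈ s, |Q.eval (f x)| ≤ τ ^ Q.natDegree / (2 * S)) (hx : x ∈ s) (hy : y ∈ s) :
    |f x - f y| ≤ τ := by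
  wlog hlt : f y < f x generalizing x y
  · rcases (not_lt.1 hlt).eq_or_lt with heq | hlt
    · simpa [heq] using hτ0.le
    · rw [abs_sub_comm]; exact this hy hx hlt
  rw [abs_of_pos (sub_pos.2 hlt)]
  refine (hQ.sub_lt hS hτ0 hτ1 hlt fun z hz => ?_).le
  obtain ⟨w, hw, rfl⟩ := hs.intermediate_value hy hx hf hz
  exact hsmall w hw

/-- No sign change of the quantities that control van der Corput's estimate for the phase
`lam * P (g 0 x)` occurs on `s`; here `Q` stands for `P'`, and `ε`, `η` separate large from small
values of `Q (g 0 x)` and `g 1 x`. -/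
structure IsSignRegularOn (Q : ℝ[X]) (g : ℕ → ℝ → ℝ) (ε η : ℝ) (s : Set ℝ) : Prop where
  abs_eval_sub : HasConstantSignOn (fun x => |Q.eval (g 0 x)| - ε) s
  abs_deriv_sub : HasConstantSignOn (fun x => |g 1 x| - η) s
  eval_derivative : HasConstantSignOn (fun x => (derivative Q).eval (g 0 x)) s
  deriv : HasConstantSignOn (g 1) s
  deriv_two : HasConstantSignOn (g 2) s

/-- The oscillatory integral over an interval without sign changes is at most `pieceConst n m S`
times the scale `δ` of the problem, where `m` is the degree of `P'` and `S` a constant as in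
`HasSublevelBound`. -/
noncomputable def pieceConst (n m : ℕ) (S : ℝ) : ℝ :=
  24 * S * (2 * sublevelConst (n + 1)) ^ m * sublevelConst n

lemma one_le_pieceConst (n m : ℕ) (hS : 1 ≤ S) : 1 ≤ pieceConst n m S :=
  one_le_mul_of_one_le_of_one_le
    (one_le_mul_of_one_le_of_one_le (by linarith)
      (one_le_pow₀ (by linarith [one_le_sublevelConst (n + 1)])))
    (one_le_sublevelConst n)

lemma norm_integral_cexp_le_sub (φ : ℝ → ℝ) (huv : u ≤ v) :
    ‖∫ x in u..v, Complex.exp (φ x * Complex.I)‖ ≤ v - u := by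
  simpa [abs_of_nonneg (sub_nonneg.2 huv)] using
    intervalIntegral.norm_integral_le_of_norm_le_const (a := u) (b := v) (C := 1)
      fun x _ => (Complex.norm_exp_ofReal_mul_I (φ x)).le

lemma IsDerivSeqOn.sub_lt_of_abs_eval_le (huv : u < v) (hδ0 : 0 < δ) (hδ1 : δ ≤ 1) (hS : 1 ≤ S)
    (hQ : HasSublevelBound Q S) (hg : IsDerivSeqOn g (n + 1) (Icc u v))
    (hgn : ∀ x ∈ Icc u v, 1 ≤ |g (n + 1) x|)
    (hsmall : ∀ x ∈ Icc u v,
      |Q.eval (g 0 x)| ≤ sublevelThreshold (n + 1) δ ^ Q.natDegree / (2 * S)) : v - u < δ := by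
  refine (hg.sub (isDerivSeqOn_eval (C (g 0 u)) _ _)).sub_lt_of_abs_le_sublevelThreshold huv hδ0
    (fun x hx => by simpa using hgn x hx) fun x hx => ?_
  simpa using hQ.abs_sub_le_of_continuousOn hS (sublevelThreshold_pos _ hδ0)
    (sublevelThreshold_le_one _ hδ0.le hδ1) isPreconnected_Icc (hg.continuousOn n.succ_pos) hsmall
    hx ⟨le_rfl, huv.le⟩

lemma IsSignRegularOn.norm_integral_cexp_le_div {ε η : ℝ} (huv : u ≤ v) (hlam : lam ≠ 0)
    (hε : 0 < ε) (hη : 0 < η) (hreg : IsSignRegularOn (derivative P) g ε η (Icc u v))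
    (hg : IsDerivSeqOn g 2 (Icc u v)) (hg₂ : ContinuousOn (g 2) (Icc u v))
    (hPε : ∀ x ∈ Icc u v, ε ≤ |(derivative P).eval (g 0 x)|) (hgη : ∀ x ∈ Icc u v, η ≤ |g 1 x|) :
    ‖∫ x in u..v, Complex.exp ((lam * P.eval (g 0 x) : ℝ) * Complex.I)‖ ≤
      6 / (|lam| * ε * η) := by
  have hcomp (p : ℝ[X]) (x) (hx : x ∈ Icc u v) : HasDerivWithinAt (fun x => lam * p.eval (g 0 x))
      (lam * ((derivative p).eval (g 0 x) * g 1 x)) (Icc u v) x :=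
    ((p.hasDerivAt _).comp_hasDerivWithinAt x (hg 0 two_pos x hx)).const_mul lam
  have hg₀ := hg.continuousOn two_pos
  have hg₁ := hg.continuousOn one_lt_two
  refine norm_integral_cexp_le_of_mul huv (mul_pos (abs_pos.2 hlam) hε) hη
    (fun x hx => (hcomp P x hx).congr_deriv (mul_assoc _ _ _).symm) (hcomp (derivative P))
    (hg 1 one_lt_two) ?_ hg₂ ?_ hreg.deriv_two (fun x hx => ?_) hgη
  · exact continuousOn_const.mul
      (((derivative (derivative P)).continuous.comp_continuousOn hg₀).mul hg₁)
  · exact (HasConstantSignOn.const lam _).mul (hreg.eval_derivative.mul hreg.deriv)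
  · rw [abs_mul]
    gcongr
    exact hPε x hx

lemma IsSignRegularOn.norm_integral_cexp_le (huv : u < v) (hδ0 : 0 < δ) (hδ1 : δ ≤ 1)
    (hS : 1 ≤ S) (hlam : |lam| * δ ^ ((n + 1) * ((derivative P).natDegree + 1)) = 1)
    (hP : HasSublevelBound (derivative P) S)
    (hreg : IsSignRegularOn (derivative P) g
      (sublevelThreshold (n + 1) δ ^ (derivative P).natDegree / (2 * S)) (sublevelThreshold n δ)
      (Icc u v))
    (hg : IsDerivSeqOn g (max n 1 + 1) (Icc u v)) (hg₂ : ContinuousOn (g 2) (Icc u v))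
    (hgn : ∀ x ∈ Icc u v, 1 ≤ |g (n + 1) x|) :
    ‖∫ x in u..v, Complex.exp ((lam * P.eval (g 0 x) : ℝ) * Complex.I)‖ ≤
      pieceConst n (derivative P).natDegree S * δ := by
  have hgn' : IsDerivSeqOn g (n + 1) (Icc u v) := hg.of_le (by omega)
  have of_sub_lt (h : v - u < δ) : ‖∫ x in u..v,
      Complex.exp ((lam * P.eval (g 0 x) : ℝ) * Complex.I)‖ ≤
        pieceConst n (derivative P).natDegree S * δ :=
    ((norm_integral_cexp_le_sub _ huv.le).trans h.le).trans
      (le_mul_of_one_le_left hδ0.le (one_le_pieceConst n _ hS))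
  rcases hreg.abs_eval_sub with hPlarge | hPsmall
  swap
  · exact of_sub_lt (hgn'.sub_lt_of_abs_eval_le huv hδ0 hδ1 hS hP hgn
      fun x hx => sub_nonpos.1 (hPsmall x hx))
  rcases hreg.abs_deriv_sub with hglarge | hgsmall
  swap
  · exact of_sub_lt ((hgn'.shift 1).sub_lt_of_abs_le_sublevelThreshold huv hδ0 hgn
      fun x hx => sub_nonpos.1 (hgsmall x hx))
  have hlam0 : lam ≠ 0 := by rintro rfl; simp at hlam
  refine (hreg.norm_integral_cexp_le_div huv.le hlam0
    (div_pos (pow_pos (sublevelThreshold_pos _ hδ0) _) (by linarith)) (sublevelThreshold_pos _ hδ0)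
    (hg.of_le (by omega)) hg₂ (fun x hx => sub_nonneg.1 (hPlarge x hx))
    fun x hx => sub_nonneg.1 (hglarge x hx)).trans_eq ?_
  have := (sublevelConst_pos n).ne'
  have := (sublevelConst_pos (n + 1)).ne'
  have hlamδ : |lam| = 1 / δ ^ ((n + 1) * ((derivative P).natDegree + 1)) :=
    eq_one_div_of_mul_eq_one_left hlam
  rw [hlamδ, pieceConst, sublevelThreshold, sublevelThreshold, div_pow, ← pow_mul]
  field_simp
  ring

lemma IsDerivSeqOn.holdsPiecewise_eval {a b : ℝ} (hn : 0 < n) (hg : IsDerivSeqOn g n (Icc a b))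
    (hgn : ∀ x ∈ Icc a b, g n x ≠ 0) (p : ℝ[X]) : HoldsPiecewise a b (p.natDegree * n)
      fun u v => HasConstantSignOn (fun x => p.eval (g 0 x)) (Icc u v) := by
  rcases eq_or_ne p 0 with rfl | hp
  · exact .of_forall fun u v _ _ _ => by simpa using HasConstantSignOn.const 0 _
  · exact .hasConstantSignOn (p.continuous.comp_continuousOn (hg.continuousOn hn))
      (hg.encard_eval_eq_zero_le hn hgn hp)

lemma IsDerivSeqOn.holdsPiecewise_abs_eval_sub {a b e : ℝ} (hn : 0 < n) (he : 0 ≤ e)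
    (hg : IsDerivSeqOn g n (Icc a b)) (hgn : ∀ x ∈ Icc a b, g n x ≠ 0) (p : ℝ[X]) :
    HoldsPiecewise a b (2 * p.natDegree * n)
      fun u v => HasConstantSignOn (fun x => |p.eval (g 0 x)| - e) (Icc u v) := by
  have hdeg : (p ^ 2 - C (e ^ 2)).natDegree = 2 * p.natDegree := by
    rw [natDegree_sub_C, natDegree_pow]
  refine hdeg ▸ (hg.holdsPiecewise_eval hn hgn (p ^ 2 - C (e ^ 2))).mono fun u v _ _ _ h => ?_
  simpa [HasConstantSignOn, sq_le_sq, abs_of_nonneg he] using h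

end Pieces

section Assembly

variable {g : ℕ → ℝ → ℝ} {n : ℕ} {P Q : ℝ[X]} {a b : ℝ}

lemma IsDerivSeqOn.holdsPiecewise_abs_deriv_sub {η : ℝ} (hη0 : 0 ≤ η) (hη1 : η ≤ 1)
    (hg : IsDerivSeqOn g (n + 1) (Icc a b)) (hgn : ∀ x ∈ Icc a b, 1 ≤ |g (n + 1) x|) :
    HoldsPiecewise a b (2 * n)
      fun u v => HasConstantSignOn (fun x => |g 1 x| - η) (Icc u v) := by
  rcases n.eq_zero_or_pos with rfl | hn
  · exact .of_forall fun u v hu _ hv => Or.inl fun x hx =>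
      sub_nonneg.2 (hη1.trans (hgn x (Icc_subset_Icc hu hv hx)))
  · simpa using (hg.shift 1).holdsPiecewise_abs_eval_sub hn hη0
      (fun x hx => abs_pos.1 (zero_lt_one.trans_le (hgn x hx))) X

lemma IsDerivSeqOn.holdsPiecewise_deriv_two (hg : IsDerivSeqOn g (n + 1) (Icc a b))
    (hg₂ : ContinuousOn (g 2) (Icc a b)) (hgn : ∀ x ∈ Icc a b, g (n + 1) x ≠ 0)
    (hmono : n = 0 → HasConstantSignOn (g 2) (Icc a b)) :
    HoldsPiecewise a b n fun u v => HasConstantSignOn (g 2) (Icc u v) := by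
  cases n with
  | zero => exact .of_forall fun u v hu _ hv => (hmono rfl).mono (Icc_subset_Icc hu hv)
  | succ n =>
    exact .hasConstantSignOn hg₂
      (((hg.shift 2).encard_zeros_le_of_ne_zero hgn).trans (mod_cast n.le_succ))

/-- A bound for the number of sign changes of the quantities in `IsSignRegularOn` for `Q` of
degree `m`. -/
def cutCount (n m : ℕ) : ℕ := 2 * m * (n + 1) + (2 * n + ((m - 1) * (n + 1) + (n + n)))

lemma IsDerivSeqOn.holdsPiecewise_isSignRegularOn {ε η : ℝ} (hε : 0 ≤ ε) (hη0 : 0 ≤ η)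
    (hη1 : η ≤ 1) (hg : IsDerivSeqOn g (max n 1 + 1) (Icc a b))
    (hg₂ : ContinuousOn (g 2) (Icc a b)) (hgn : ∀ x ∈ Icc a b, 1 ≤ |g (n + 1) x|)
    (hmono : n = 0 → HasConstantSignOn (g 2) (Icc a b)) (Q : ℝ[X]) :
    HoldsPiecewise a b (cutCount n Q.natDegree)
      fun u v => IsSignRegularOn Q g ε η (Icc u v) := by
  have hg' : IsDerivSeqOn g (n + 1) (Icc a b) := hg.of_le (by omega)
  have hgn0 (x) (hx : x ∈ Icc a b) : g (n + 1) x ≠ 0 :=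
    abs_pos.1 (zero_lt_one.trans_le (hgn x hx))
  have hderiv : HoldsPiecewise a b n fun u v => HasConstantSignOn (g 1) (Icc u v) :=
    .hasConstantSignOn (hg.continuousOn (by omega)) ((hg'.shift 1).encard_zeros_le_of_ne_zero hgn0)
  have hQ' := hg'.holdsPiecewise_eval n.succ_pos hgn0 (derivative Q)
  rw [natDegree_derivative] at hQ'
  refine ((hg'.holdsPiecewise_abs_eval_sub n.succ_pos hε hgn0 Q).and
    ((hg'.holdsPiecewise_abs_deriv_sub hη0 hη1 hgn).and
      (hQ'.and (hderiv.and (hg'.holdsPiecewise_deriv_two hg₂ hgn0 hmono))))).mono ?_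
  rintro u v - - - ⟨h₁, h₂, h₃, h₄, h₅⟩
  exact ⟨h₁, h₂, h₃, h₄, h₅⟩

lemma norm_integral_cexp_eval_le {δ S lam : ℝ} (hab : a < b) (hδ0 : 0 < δ) (hδ1 : δ ≤ 1)
    (hS : 1 ≤ S) (hlam : |lam| * δ ^ ((n + 1) * ((derivative P).natDegree + 1)) = 1)
    (hP : HasSublevelBound (derivative P) S) (hg : IsDerivSeqOn g (max n 1 + 1) (Icc a b))
    (hg₂ : ContinuousOn (g 2) (Icc a b)) (hgn : ∀ x ∈ Icc a b, 1 ≤ |g (n + 1) x|)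
    (hmono : n = 0 → HasConstantSignOn (g 2) (Icc a b)) :
    ‖∫ x in a..b, Complex.exp ((lam * P.eval (g 0 x) : ℝ) * Complex.I)‖ ≤
      (cutCount n (derivative P).natDegree + 1) *
        (pieceConst n (derivative P).natDegree S * δ) := by
  set E : ℝ → ℂ := fun x => Complex.exp ((lam * P.eval (g 0 x) : ℝ) * Complex.I)
  have hE : ContinuousOn E (Icc a b) := by
    have := P.continuous.comp_continuousOn (hg.continuousOn (Nat.succ_pos _))
    fun_prop
  have hint {u v : ℝ} (hu : a ≤ u) (huv : u ≤ v) (hv : v ≤ b) : IntervalIntegrable E volume u v :=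
    (hE.mono (Icc_subset_Icc hu hv)).intervalIntegrable_of_Icc huv
  refine HoldsPiecewise.le_mul_of_subadditive (F := fun u v => ‖∫ x in u..v, E x‖) hab
    (mul_nonneg (zero_le_one.trans (one_le_pieceConst n _ hS)) hδ0.le)
    (fun u v w hu huv hvw hw => ?_) ?_
  · rw [← intervalIntegral.integral_add_adjacent_intervals (hint hu huv.le (hvw.le.trans hw))
      (hint (hu.trans huv.le) hvw.le hw)]
    exact norm_add_le _ _
  · have hε : 0 < sublevelThreshold (n + 1) δ ^ (derivative P).natDegree / (2 * S) :=
      div_pos (pow_pos (sublevelThreshold_pos _ hδ0) _) (by linarith)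
    refine (hg.holdsPiecewise_isSignRegularOn hε.le (sublevelThreshold_pos n hδ0).le
      (sublevelThreshold_le_one n hδ0.le hδ1) hg₂ hgn hmono (derivative P)).mono
      fun u v hu huv hv hreg => ?_
    have hsub := Icc_subset_Icc hu hv
    exact hreg.norm_integral_cexp_le huv hδ0 hδ1 hS hlam hP (hg.mono hsub) (hg₂.mono hsub)
      fun x hx => hgn x (hsub hx)

end Assembly

lemma hasConstantSignOn_iteratedDerivWithin_two {f : ℝ → ℝ} {s : Set ℝ}
    (hf : MonotoneOn (derivWithin f s) s ∨ AntitoneOn (derivWithin f s) s) :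
    HasConstantSignOn (iteratedDerivWithin 2 f s) s := by
  rw [iteratedDerivWithin_succ, iteratedDerivWithin_one]
  exact hf.imp (fun h x _ => h.derivWithin_nonneg) fun h x _ => h.derivWithin_nonpos

lemma mul_rpow_neg_one_div_pow {x : ℝ} (hx : 0 < x) {k : ℕ} (hk : k ≠ 0) :
    x * (x ^ (-(1 / (k : ℝ)))) ^ k = 1 := by
  have hk' : (k : ℝ) ≠ 0 := mod_cast hk
  rw [← Real.rpow_mul_natCast hx.le, neg_mul, one_div_mul_cancel hk', Real.rpow_neg_one,
    mul_inv_cancel₀ hx.ne']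

theorem stmt_4_general (N d : ℕ) (hN : 1 ≤ N) (hd : 1 ≤ d) :
    ∃ C : ℝ, 0 < C ∧
      ∀ (a b : ℝ), a ≤ b →
      ∀ f : ℝ → ℝ, ContDiffOn ℝ (max N 2 : ℕ) f (Icc a b) →
      (∀ x ∈ Icc a b, 1 ≤ |iteratedDerivWithin N f (Icc a b) x|) →
      (N = 1 →
        MonotoneOn (derivWithin f (Icc a b)) (Icc a b) ∨
        AntitoneOn (derivWithin f (Icc a b)) (Icc a b)) →
      ∀ P : ℝ[X], P.natDegree = d → (P.derivative.Monic ∨ IsSND P.derivative) →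
      ∀ lam : ℝ, 1 ≤ |lam| →
        ‖∫ x in Icc a b, Complex.exp (Complex.I * (lam : ℂ) * ((P.eval (f x) : ℝ) : ℂ))‖ ≤
          C * |lam| ^ (-(1 / ((N : ℝ) * (d : ℝ)))) := by
  obtain ⟨n, rfl⟩ := Nat.exists_eq_add_of_le' hN
  obtain ⟨S, hS, hPS⟩ := exists_hasSublevelBound (d - 1)
  have hpiece := one_le_pieceConst n (d - 1) hS
  refine ⟨(cutCount n (d - 1) + 1) * pieceConst n (d - 1) S, by positivity,
    fun a b hab f hf hfN hmono P hP hP' lam hlam => ?_⟩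
  have hlam0 : 0 < |lam| := zero_lt_one.trans_le hlam
  have hphase (x : ℝ) : Complex.I * (lam : ℂ) * ((P.eval (f x) : ℝ) : ℂ) =
      (lam * P.eval (f x) : ℝ) * Complex.I := by push_cast; ring
  simp only [hphase, integral_Icc_eq_integral_Ioc, ← intervalIntegral.integral_of_le hab]
  rcases hab.eq_or_lt with rfl | hab
  · rw [intervalIntegral.integral_same, norm_zero]
    positivity
  have hdeg : (derivative P).natDegree = d - 1 := by rw [natDegree_derivative, hP]
  have hδ := mul_rpow_neg_one_div_pow hlam0 (mul_ne_zero n.succ_ne_zero (Nat.ne_of_gt hd))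
  rw [Nat.cast_mul, ← Nat.sub_add_cancel hd, ← hdeg] at hδ
  have hbound := norm_integral_cexp_eval_le (g := fun j => iteratedDerivWithin j f (Icc a b)) hab
    (by positivity) (Real.rpow_le_one_of_one_le_of_nonpos hlam (neg_nonpos.2 (by positivity)))
    hS hδ (hPS _ hdeg hP')
    (isDerivSeqOn_iteratedDerivWithin (hf.of_le (mod_cast by omega)) (uniqueDiffOn_Icc hab))
    (hf.continuousOn_iteratedDerivWithin (mod_cast le_max_right _ _) (uniqueDiffOn_Icc hab))
    hfN (fun hn => hasConstantSignOn_iteratedDerivWithin_two (hmono (by omega)))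
  rw [hdeg, Nat.sub_add_cancel hd] at hbound
  simpa only [mul_assoc, iteratedDerivWithin_zero] using hbound

/-- Let `N ≥ 1` and `f` smooth on `I = [a, b]` with `|f^{(N)}| ≥ 1` on
`I`, and if `N = 1` assume in addition that `f'` is monotone on `I`. Then there is a
constant `C = C(d, N)` such that for every polynomial `P` of degree `d ≥ 2` with `P'`
monic or SND, and all `|λ| ≥ 1`, `|∫_I e^{iλ P(f)}| ≤ C |λ|^{-1/(N d)}`. -/
theorem stmt_4 (N d : ℕ) (hN : 1 ≤ N) (hd : 2 ≤ d) :
    ∃ C : ℝ, 0 < C ∧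
      ∀ (a b : ℝ), a ≤ b →
      ∀ f : ℝ → ℝ, ContDiffOn ℝ (⊤ : ℕ∞) f (Set.Icc a b) →
      (∀ x ∈ Set.Icc a b, 1 ≤ |iteratedDerivWithin N f (Set.Icc a b) x|) →
      (N = 1 →
        MonotoneOn (derivWithin f (Set.Icc a b)) (Set.Icc a b) ∨
        AntitoneOn (derivWithin f (Set.Icc a b)) (Set.Icc a b)) →
      ∀ P : Polynomial ℝ, P.natDegree = d →
        (P.derivative.Monic ∨ IsSND P.derivative) →
      ∀ lam : ℝ, 1 ≤ |lam| →
        ‖∫ x in Set.Icc a b, Complex.exp (Complex.I * (lam : ℂ) * ((P.eval (f x) : ℝ) : ℂ))‖ ≤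
          C * |lam| ^ (-(1 / ((N : ℝ) * (d : ℝ)))) := by
  obtain ⟨C, hC, hbound⟩ := stmt_4_general N d hN (one_le_two.trans hd)
  exact ⟨C, hC, fun a b hab f hf => hbound a b hab f (hf.of_le (mod_cast le_top))⟩
end
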